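/- Let k be a positive integer and Z₁, Z₂ ≥ 2 real numbers with Z₁Z₂ > k^{19/10}. Then the number of quadruples (a,b,c,d) of positive integers with Z₁ ≤ ab < 2Z₁, Z₂ ≤ cd < 2Z₂, gcd(abcd, k) = 1, ac ≡ ±bd (mod k), and ac ≠ bd is O((Z₁Z₂/k)·(log Z₁Z₂)^3), with an absolute implied constant. -/

import Mathlib

section

open Finset

theorem sum_log_prime_div_le (n : ℕ) :
    ∑ p ∈ (range (n + 1)).filter Nat.Prime, Real.log p / p ≤ 2 * Real.log n := by
  rcases Nat.eq_zero_or_pos n with rfl | hn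
  · simp [Finset.sum_filter]
  have hdvd : ∏ p ∈ (range (n + 1)).filter Nat.Prime, p ^ (n / p) ∣ n.factorial := by
    apply Finset.prod_dvd_of_isRelPrime
    · intro p hp r hr hpr
      have hp' := (mem_filter.mp hp).2
      have hr' := (mem_filter.mp hr).2
      exact Nat.coprime_iff_isRelPrime.1
        (Nat.Coprime.pow _ _ ((Nat.coprime_primes hp' hr').2 hpr))
    · intro p hp
      have hp' := (mem_filter.mp hp).2
      rw [hp'.pow_dvd_factorial_iff (Nat.lt_succ_self _)]
      have h1 : 1 ∈ Finset.Ico 1 (Nat.log p n).succ := by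
        have : p ≤ n := by have := (mem_filter.mp hp).1; simp at this; omega
        have := Nat.log_pos hp'.one_lt this
        rw [Finset.mem_Ico]; omega
      simpa using Finset.single_le_sum (f := fun i => n / p ^ i) (fun _ _ => Nat.zero_le _) h1
  have hle := (Nat.le_of_dvd n.factorial_pos hdvd).trans n.factorial_le_pow
  have hle' : Real.log ((∏ p ∈ (range (n + 1)).filter Nat.Prime, p ^ (n / p) : ℕ) : ℝ) ≤
      Real.log ((n ^ n : ℕ) : ℝ) := by
    apply Real.log_le_log _ (by exact_mod_cast hle)
    have : 0 < ∏ p ∈ (range (n + 1)).filter Nat.Prime, p ^ (n / p) :=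
      Finset.prod_pos fun p hp => pow_pos (mem_filter.mp hp).2.pos _
    exact_mod_cast this
  push_cast at hle'
  rw [Real.log_prod (fun p hp => by
    have := (mem_filter.mp hp).2.pos
    positivity), Real.log_pow] at hle'
  have hn' : (0 : ℝ) < n := by exact_mod_cast hn
  have : (n : ℝ) * ∑ p ∈ (range (n + 1)).filter Nat.Prime, Real.log p / p ≤
      n * (2 * Real.log n) := by
    calc _ = ∑ p ∈ (range (n + 1)).filter Nat.Prime, n * (Real.log p / p) := by rw [mul_sum]
      _ ≤ ∑ p ∈ (range (n + 1)).filter Nat.Prime, 2 * Real.log ((p : ℝ) ^ (n / p)) := by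
        apply sum_le_sum
        intro p hp
        obtain ⟨hp1, hp'⟩ := mem_filter.mp hp
        rw [Real.log_pow]
        have hpp : (0 : ℝ) < p := by exact_mod_cast hp'.pos
        have hl : 0 ≤ Real.log p := Real.log_nonneg (by exact_mod_cast hp'.one_lt.le)
        have hpn : p ≤ n := by simp at hp1; omega
        have h2 : n ≤ 2 * (n / p) * p := by
          have h3 : 1 ≤ n / p := Nat.div_pos hpn hp'.pos
          have h4 := Nat.div_add_mod n p
          have h5 := Nat.mod_lt n hp'.pos
          nlinarith
        have h2' : (n : ℝ) / p ≤ 2 * ((n / p : ℕ) : ℝ) := by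
          rw [div_le_iff₀ hpp]; exact_mod_cast h2
        calc n * (Real.log p / p) = n / p * Real.log p := by ring
          _ ≤ 2 * ((n / p : ℕ) : ℝ) * Real.log p := by gcongr
          _ = _ := by ring
      _ = 2 * ∑ p ∈ (range (n + 1)).filter Nat.Prime, Real.log ((p : ℝ) ^ (n / p)) := by
        rw [mul_sum]
      _ ≤ 2 * (n * Real.log n) := by gcongr
      _ = _ := by ring
  exact le_of_mul_le_mul_left this hn'

/-- The primes up to `w` that do not divide `q`. -/
noncomputable def sievePrimes (q : ℕ) (w : ℝ) : Finset ℕ :=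
  (range (⌊w⌋₊ + 1)).filter fun p => p.Prime ∧ ¬ p ∣ q

theorem mem_sievePrimes {q : ℕ} {w : ℝ} (hw : 0 ≤ w) {p : ℕ} :
    p ∈ sievePrimes q w ↔ (p : ℝ) ≤ w ∧ p.Prime ∧ ¬ p ∣ q := by
  simp [sievePrimes, Nat.le_floor_iff hw]

theorem sum_sievePrimes_log_div_le (q : ℕ) {w : ℝ} (hw : 1 ≤ w) :
    ∑ p ∈ sievePrimes q w, Real.log p / p ≤ 2 * Real.log w := by
  refine le_trans ?_ ((sum_log_prime_div_le ⌊w⌋₊).trans ?_)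
  · apply sum_le_sum_of_subset_of_nonneg
    · intro p hp
      simp only [sievePrimes, mem_filter] at hp ⊢
      tauto
    · intro p _ _
      positivity
  · have : 1 ≤ ⌊w⌋₊ := Nat.le_floor (by simpa using hw)
    have h1 : (1 : ℝ) ≤ ⌊w⌋₊ := by exact_mod_cast this
    gcongr
    exact Nat.floor_le (by linarith)

/-- The product of `1 + 1 / p` over the primes of `sievePrimes q w`. -/
noncomputable def sieveProd (q : ℕ) (w : ℝ) : ℝ := ∏ p ∈ sievePrimes q w, (1 + 1 / (p : ℝ))

/-- The product of the primes of `sievePrimes q w`. -/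
noncomputable def sieveModulus (q : ℕ) (w : ℝ) : ℕ := ∏ p ∈ sievePrimes q w, p

theorem prime_of_mem_sievePrimes {q : ℕ} {w : ℝ} {p : ℕ} (hp : p ∈ sievePrimes q w) :
    p.Prime := (mem_filter.mp hp).2.1

theorem sieveModulus_pos (q : ℕ) (w : ℝ) : 0 < sieveModulus q w :=
  Finset.prod_pos fun _ hp => (prime_of_mem_sievePrimes hp).pos

theorem primeFactors_sieveModulus (q : ℕ) (w : ℝ) :
    (sieveModulus q w).primeFactors = sievePrimes q w :=
  Nat.primeFactors_prod fun _ hp => prime_of_mem_sievePrimes hp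

theorem squarefree_sieveModulus (q : ℕ) (w : ℝ) : Squarefree (sieveModulus q w) := by
  unfold sieveModulus
  apply Finset.squarefree_prod_of_pairwise_isCoprime
  · intro p hp r hr hpr
    exact Nat.coprime_iff_isRelPrime.1 ((Nat.coprime_primes (prime_of_mem_sievePrimes hp)
      (prime_of_mem_sievePrimes hr)).2 hpr)
  · intro p hp
    exact (prime_of_mem_sievePrimes hp).prime.squarefree

theorem sieveModulus_coprime (q : ℕ) (w : ℝ) : (sieveModulus q w).Coprime q := by
  apply Nat.Coprime.prod_left
  intro p hp
  exact (Nat.Prime.coprime_iff_not_dvd (prime_of_mem_sievePrimes hp)).2 (mem_filter.mp hp).2.2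

theorem sieveProd_eq_sum (q : ℕ) (w : ℝ) :
    sieveProd q w = ∑ d ∈ (sieveModulus q w).divisors, 1 / (d : ℝ) := by
  let f : ArithmeticFunction ℝ := ⟨fun n => 1 / (n : ℝ), by simp⟩
  have hf : f.IsMultiplicative := ⟨by simp [f], by intro m n _; simp [f, mul_comm]⟩
  have := hf.prodPrimeFactors_one_add_of_squarefree (squarefree_sieveModulus q w)
  rw [primeFactors_sieveModulus] at this
  exact this

theorem sieveProd_le_two_mul_sum (q : ℕ) {w Y : ℝ} (hw : 1 ≤ w) (hY : 1 < Y) (hwY : w ^ 4 ≤ Y) :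
    sieveProd q w ≤
      2 * ∑ d ∈ (sieveModulus q w).divisors.filter (fun d : ℕ => (d : ℝ) ≤ Y), 1 / (d : ℝ) := by
  set P := sieveModulus q w with hP
  have hP0 : P ≠ 0 := (sieveModulus_pos q w).ne'
  have hlogY : 0 < Real.log Y := Real.log_pos hY
  have hQ0 : 0 ≤ sieveProd q w := Finset.prod_nonneg fun p _ => by positivity
  have hlog : ∑ d ∈ P.divisors, Real.log d / d ≤ 2 * Real.log w * sieveProd q w := by
    calc ∑ d ∈ P.divisors, Real.log d / d
        = ∑ d ∈ P.divisors, ∑ p ∈ sievePrimes q w,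
            if p ∣ d then Real.log p / d else 0 := by
          apply sum_congr rfl
          intro d hd
          have hdP := Nat.dvd_of_mem_divisors hd
          have hsq := (squarefree_sieveModulus q w).squarefree_of_dvd hdP
          have hd0 : d ≠ 0 := ne_zero_of_dvd_ne_zero hP0 hdP
          rw [← sum_filter]
          have hfil : (sievePrimes q w).filter (fun p => p ∣ d) = d.primeFactors := by
            ext p
            rw [mem_filter, ← primeFactors_sieveModulus, Nat.mem_primeFactors,
              Nat.mem_primeFactors]
            constructor
            · rintro ⟨⟨h1, h2, h3⟩, h4⟩; exact ⟨h1, h4, hd0⟩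
            · rintro ⟨h1, h2, h3⟩; exact ⟨⟨h1, h2.trans hdP, hP0⟩, h2⟩
          rw [hfil, ← sum_div, ← Real.log_prod (fun p hp => by
            exact_mod_cast (Nat.prime_of_mem_primeFactors hp).ne_zero)]
          congr 2
          rw [← Nat.cast_prod, Nat.prod_primeFactors_of_squarefree hsq]
      _ = ∑ p ∈ sievePrimes q w, ∑ d ∈ P.divisors.filter (fun d => p ∣ d), Real.log p / d := by
          rw [sum_comm]
          apply sum_congr rfl
          intro p _
          rw [sum_filter]
      _ ≤ ∑ p ∈ sievePrimes q w, Real.log p / p * sieveProd q w := by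
          apply sum_le_sum
          intro p hp
          have hp' := prime_of_mem_sievePrimes hp
          have hp0 : (p : ℝ) ≠ 0 := by exact_mod_cast hp'.ne_zero
          have hmap : ∑ d ∈ P.divisors.filter (fun d => p ∣ d), Real.log p / (d : ℝ) =
              ∑ e ∈ (P.divisors.filter (fun d => p ∣ d)).image (fun d => d / p),
                Real.log p / p * (1 / (e : ℝ)) := by
            rw [sum_image]
            · apply sum_congr rfl
              intro d hd
              obtain ⟨e, rfl⟩ := (mem_filter.mp hd).2
              rw [Nat.mul_div_cancel_left _ hp'.pos]
              push_cast
              field_simp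
            · intro d hd d' hd' h
              obtain ⟨e, rfl⟩ := (mem_filter.mp hd).2
              obtain ⟨e', rfl⟩ := (mem_filter.mp hd').2
              simp only [Nat.mul_div_cancel_left _ hp'.pos] at h
              rw [h]
          rw [hmap, sieveProd_eq_sum, mul_sum]
          apply sum_le_sum_of_subset_of_nonneg
          · intro e he
            obtain ⟨d, hd, rfl⟩ := mem_image.mp he
            obtain ⟨hd1, hd2⟩ := mem_filter.mp hd
            exact Nat.mem_divisors.2
              ⟨(Nat.div_dvd_of_dvd hd2).trans (Nat.dvd_of_mem_divisors hd1), hP0⟩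
          · intro e _ _
            positivity
      _ ≤ _ := by
          rw [← sum_mul]
          gcongr
          exact sum_sievePrimes_log_div_le q hw
  have hlw : 4 * Real.log w ≤ Real.log Y := by
    have := Real.log_le_log (by positivity) hwY
    rwa [Real.log_pow] at this
  have hbig : ∑ d ∈ P.divisors.filter (fun d : ℕ => ¬ (d : ℝ) ≤ Y), 1 / (d : ℝ) ≤
      1 / 2 * sieveProd q w := by
    have h1 : Real.log Y * ∑ d ∈ P.divisors.filter (fun d : ℕ => ¬ (d : ℝ) ≤ Y), 1 / (d : ℝ) ≤
        Real.log Y * (1 / 2 * sieveProd q w) := by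
      calc _ = ∑ d ∈ P.divisors.filter (fun d : ℕ => ¬ (d : ℝ) ≤ Y),
            Real.log Y * (1 / (d : ℝ)) := by rw [mul_sum]
        _ ≤ ∑ d ∈ P.divisors.filter (fun d : ℕ => ¬ (d : ℝ) ≤ Y), Real.log d / d := by
            apply sum_le_sum
            intro d hd
            have := (mem_filter.mp hd).2
            push Not at this
            rw [mul_one_div]
            gcongr
        _ ≤ ∑ d ∈ P.divisors, Real.log d / d :=
            sum_le_sum_of_subset_of_nonneg (filter_subset _ _) fun d _ _ => by positivity
        _ ≤ 2 * Real.log w * sieveProd q w := hlog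
        _ ≤ _ := by nlinarith
    exact le_of_mul_le_mul_left h1 hlogY
  have hsplit := sum_filter_add_sum_filter_not P.divisors (fun d : ℕ => (d : ℝ) ≤ Y)
    (fun d : ℕ => 1 / (d : ℝ))
  rw [← sieveProd_eq_sum q w] at hsplit
  linarith

section

open ArithmeticFunction

theorem sum_moebius_mul_gcd (d d' : ℕ) (hd : 0 < d) (hd' : 0 < d') :
    ∑ x ∈ d.divisorsAntidiagonal, ∑ y ∈ d'.divisorsAntidiagonal,
      ((moebius x.1 : ℤ) : ℝ) * ((moebius y.1 : ℤ) : ℝ) * (Nat.gcd x.2 y.2 : ℝ) =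
      if d = d' then (Nat.totient d : ℝ) else 0 := by
  have h1 : ∀ e' : ℕ, 0 < e' → ∑ x ∈ d.divisorsAntidiagonal,
      ((moebius x.1 : ℤ) : ℝ) * (Nat.gcd x.2 e' : ℝ) =
      if d ∣ e' then (Nat.totient d : ℝ) else 0 := by
    intro e' he'
    have := (sum_eq_iff_sum_mul_moebius_eq (R := ℝ)
      (f := fun t => if t ∣ e' then (Nat.totient t : ℝ) else 0)
      (g := fun n => (Nat.gcd n e' : ℝ))).1 (by
        intro n hn
        rw [← sum_filter]
        have : n.divisors.filter (fun t => t ∣ e') = (Nat.gcd n e').divisors := by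
          ext t
          simp [Nat.dvd_gcd_iff, hn.ne', he'.ne']
        rw [this]
        exact_mod_cast Nat.sum_totient _) d hd
    exact this
  have h2 : ∑ y ∈ d'.divisorsAntidiagonal, ((moebius y.1 : ℤ) : ℝ) *
      (if d ∣ y.2 then (Nat.totient d : ℝ) else 0) =
      if d = d' then (Nat.totient d : ℝ) else 0 := by
    have := (sum_eq_iff_sum_mul_moebius_eq (R := ℝ)
      (f := fun t => if d = t then (Nat.totient d : ℝ) else 0)
      (g := fun n => if d ∣ n then (Nat.totient d : ℝ) else 0)).1 (by
        intro n hn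
        rw [sum_ite_eq]
        simp [hn.ne']) d' hd'
    exact this
  rw [sum_comm, ← h2]
  apply sum_congr rfl
  intro y hy
  have hy2 : 0 < y.2 := by
    rw [Nat.mem_divisorsAntidiagonal] at hy
    exact Nat.pos_of_ne_zero fun h => hy.2 (by rw [← hy.1, h, mul_zero])
  rw [← h1 _ hy2, mul_sum]
  apply sum_congr rfl
  intro x _
  ring

/-- The Ramanujan sum of modulus `d` at `f`. -/
noncomputable def ramanujanSum (d f : ℕ) : ℝ :=
  ∑ x ∈ d.divisorsAntidiagonal, ((moebius x.1 : ℤ) : ℝ) * (if x.2 ∣ f then (x.2 : ℝ) else 0)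

theorem ramanujanSum_of_coprime {d f : ℕ} (hd : d ≠ 0) (h : Nat.Coprime d f) :
    ramanujanSum d f = ((moebius d : ℤ) : ℝ) := by
  unfold ramanujanSum
  rw [sum_eq_single (d, 1)]
  · simp
  · intro x hx hne
    rw [Nat.mem_divisorsAntidiagonal] at hx
    rw [if_neg, mul_zero]
    intro hxf
    have : x.2 = 1 := Nat.eq_one_of_dvd_coprimes h ⟨x.1, by rw [← hx.1, mul_comm]⟩ hxf
    apply hne
    ext
    · simpa [this] using hx.1
    · exact this
  · intro hne
    exact absurd (Nat.mem_divisorsAntidiagonal.2 ⟨by simp, hd⟩) hne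

theorem abs_sum_ramanujanSum_mul_sub_le (A : Finset ℕ) {X : ℝ} {d d' : ℕ} (hd : 0 < d)
    (hd' : 0 < d')
    (h : ∀ e, e ∣ d → ∀ e', e' ∣ d' → |((A.filter fun f => Nat.lcm e e' ∣ f).card : ℝ) -
      X / (Nat.lcm e e' : ℝ)| ≤ 1) :
    |∑ f ∈ A, ramanujanSum d f * ramanujanSum d' f -
      X * if d = d' then (Nat.totient d : ℝ) else 0| ≤ ((d : ℝ) * d) * (d' * d') := by
  have hexp : ∑ f ∈ A, ramanujanSum d f * ramanujanSum d' f -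
      X * (if d = d' then (Nat.totient d : ℝ) else 0) =
      ∑ x ∈ d.divisorsAntidiagonal, ∑ y ∈ d'.divisorsAntidiagonal,
        ((moebius x.1 : ℤ) : ℝ) * ((moebius y.1 : ℤ) : ℝ) * (x.2 * y.2) *
        (((A.filter fun f => Nat.lcm x.2 y.2 ∣ f).card : ℝ) - X / (Nat.lcm x.2 y.2 : ℝ)) := by
    rw [← sum_moebius_mul_gcd d d' hd hd', mul_sum]
    have : ∑ f ∈ A, ramanujanSum d f * ramanujanSum d' f =
        ∑ x ∈ d.divisorsAntidiagonal, ∑ y ∈ d'.divisorsAntidiagonal,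
        ((moebius x.1 : ℤ) : ℝ) * ((moebius y.1 : ℤ) : ℝ) * (x.2 * y.2) *
        ((A.filter fun f => Nat.lcm x.2 y.2 ∣ f).card : ℝ) := by
      simp_rw [ramanujanSum, sum_mul_sum]
      rw [sum_comm]
      apply sum_congr rfl
      intro x _
      rw [sum_comm]
      apply sum_congr rfl
      intro y _
      rw [card_filter, Nat.cast_sum, mul_sum]
      apply sum_congr rfl
      intro f _
      by_cases h1 : x.2 ∣ f <;> by_cases h2 : y.2 ∣ f <;> simp [Nat.lcm_dvd_iff, h1, h2]
      ring
    rw [this, ← sum_sub_distrib]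
    apply sum_congr rfl
    intro x hx
    rw [mul_sum, ← sum_sub_distrib]
    apply sum_congr rfl
    intro y hy
    rw [Nat.mem_divisorsAntidiagonal] at hx hy
    have hx2 : x.2 ≠ 0 := fun h => hx.2 (by rw [← hx.1, h, mul_zero])
    have hy2 : y.2 ≠ 0 := fun h => hy.2 (by rw [← hy.1, h, mul_zero])
    have hl : (Nat.lcm x.2 y.2 : ℝ) ≠ 0 := by exact_mod_cast Nat.lcm_ne_zero hx2 hy2
    have hg : (Nat.gcd x.2 y.2 : ℝ) * (Nat.lcm x.2 y.2 : ℝ) = x.2 * y.2 := by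
      exact_mod_cast Nat.gcd_mul_lcm _ _
    field_simp
    linear_combination (-((moebius x.1 : ℤ) : ℝ) * ((moebius y.1 : ℤ) : ℝ) * X) * hg
  rw [hexp]
  have hsum : ∀ n : ℕ, ∑ x ∈ n.divisorsAntidiagonal, (x.2 : ℝ) ≤ n * n := by
    intro n
    rw [Nat.sum_divisorsAntidiagonal (f := fun _ j => (j : ℝ)), Nat.sum_div_divisors n
      (fun j => (j : ℝ))]
    calc ∑ i ∈ n.divisors, (i : ℝ) ≤ ∑ i ∈ n.divisors, (n : ℝ) :=
          sum_le_sum fun i hi => by exact_mod_cast Nat.divisor_le hi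
      _ = n.divisors.card * n := by rw [sum_const, nsmul_eq_mul]
      _ ≤ n * n := by gcongr; exact_mod_cast Nat.card_divisors_le_self n
  have hmu : ∀ n : ℕ, |((moebius n : ℤ) : ℝ)| ≤ 1 := by
    intro n
    exact_mod_cast abs_moebius_le_one (n := n)
  calc _ ≤ ∑ x ∈ d.divisorsAntidiagonal, ∑ y ∈ d'.divisorsAntidiagonal,
        ((x.2 : ℝ) * y.2) := by
        refine (abs_sum_le_sum_abs _ _).trans (sum_le_sum fun x hx => ?_)
        refine (abs_sum_le_sum_abs _ _).trans (sum_le_sum fun y hy => ?_)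
        rw [Nat.mem_divisorsAntidiagonal] at hx hy
        rw [abs_mul, abs_mul, abs_mul, abs_of_nonneg (by positivity : (0 : ℝ) ≤ x.2 * y.2)]
        have h3 := h x.2 ⟨x.1, by rw [← hx.1, mul_comm]⟩ y.2 ⟨y.1, by rw [← hy.1, mul_comm]⟩
        calc _ ≤ 1 * 1 * ((x.2 : ℝ) * y.2) * 1 := by
              gcongr
              · exact hmu _
              · exact hmu _
          _ = _ := by ring
    _ = (∑ x ∈ d.divisorsAntidiagonal, (x.2 : ℝ)) *
        ∑ y ∈ d'.divisorsAntidiagonal, (y.2 : ℝ) := by rw [sum_mul_sum]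
    _ ≤ _ := by
        gcongr
        · exact hsum d
        · exact hsum d'

/-- Selberg's upper bound sieve. -/
theorem card_coprime_mul_sum_le (A : Finset ℕ) {P : ℕ} (hP : Squarefree P) {X Y : ℝ}
    (hY : 1 ≤ Y)
    (h : ∀ e, e ∣ P → |((A.filter fun f => e ∣ f).card : ℝ) - X / (e : ℝ)| ≤ 1) :
    ((A.filter fun f => Nat.Coprime P f).card : ℝ) *
      ∑ d ∈ P.divisors.filter (fun d : ℕ => (d : ℝ) ≤ Y), 1 / (d : ℝ) ≤ X + Y ^ 6 := by
  set D := P.divisors.filter (fun d : ℕ => (d : ℝ) ≤ Y) with hD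
  have hP0 : P ≠ 0 := hP.ne_zero
  have hDP : ∀ d ∈ D, d ∣ P := fun d hd => Nat.dvd_of_mem_divisors (mem_filter.mp hd).1
  have hDpos : ∀ d ∈ D, 0 < d := fun d hd => Nat.pos_of_dvd_of_pos (hDP d hd) (by omega)
  set G : ℝ := ∑ d ∈ D, 1 / (Nat.totient d : ℝ) with hG
  let wt : ℕ → ℝ := fun d => ((moebius d : ℤ) : ℝ) / (Nat.totient d : ℝ)
  have hGle : ∑ d ∈ D, 1 / (d : ℝ) ≤ G := by
    apply sum_le_sum
    intro d hd
    have := Nat.totient_pos.2 (hDpos d hd)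
    gcongr
    exact Nat.totient_le d
  have hone : 1 ≤ G := by
    have : (1 : ℕ) ∈ D := by simp [hD, hP0, hY]
    calc (1 : ℝ) = 1 / (Nat.totient 1 : ℝ) := by simp
      _ ≤ G := single_le_sum (f := fun d : ℕ => 1 / (Nat.totient d : ℝ))
          (fun d _ => by positivity) this
  have hmu2 : ∀ d ∈ D, ((moebius d : ℤ) : ℝ) * ((moebius d : ℤ) : ℝ) = 1 := by
    intro d hd
    have hsq := hP.squarefree_of_dvd (hDP d hd)
    have := moebius_sq_eq_one_of_squarefree hsq
    rw [sq] at this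
    exact_mod_cast this
  have hwt : ∀ d ∈ D, |wt d| ≤ 1 := by
    intro d hd
    have h1 : (1 : ℝ) ≤ (Nat.totient d : ℝ) := by
      exact_mod_cast Nat.totient_pos.2 (hDpos d hd)
    simp only [wt, abs_div]
    rw [abs_of_nonneg (by linarith : (0 : ℝ) ≤ (Nat.totient d : ℝ))]
    apply div_le_one_of_le₀ _ (by linarith)
    refine le_trans ?_ h1
    exact_mod_cast abs_moebius_le_one (n := d)
  have hF : ∀ f ∈ A.filter (fun f => Nat.Coprime P f), ∑ d ∈ D, wt d * ramanujanSum d f = G := by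
    intro f hf
    apply sum_congr rfl
    intro d hd
    rw [ramanujanSum_of_coprime (hDpos d hd).ne'
      ((mem_filter.mp hf).2.coprime_dvd_left (hDP d hd))]
    simp only [wt]
    rw [div_mul_eq_mul_div, hmu2 d hd]
  have hlow : ((A.filter fun f => Nat.Coprime P f).card : ℝ) * G ^ 2 ≤
      ∑ f ∈ A, (∑ d ∈ D, wt d * ramanujanSum d f) ^ 2 := by
    calc _ = ∑ f ∈ A.filter (fun f => Nat.Coprime P f),
          (∑ d ∈ D, wt d * ramanujanSum d f) ^ 2 := by
          rw [sum_congr rfl (fun f hf => by rw [hF f hf]), sum_const, nsmul_eq_mul]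
      _ ≤ _ := sum_le_sum_of_subset_of_nonneg (filter_subset _ _) fun _ _ _ => sq_nonneg _
  have hexp : ∑ f ∈ A, (∑ d ∈ D, wt d * ramanujanSum d f) ^ 2 =
      ∑ d ∈ D, ∑ d' ∈ D, wt d * wt d' *
        ∑ f ∈ A, ramanujanSum d f * ramanujanSum d' f := by
    simp_rw [sq, sum_mul_sum, mul_sum]
    rw [sum_comm]
    apply sum_congr rfl
    intro d _
    rw [sum_comm]
    apply sum_congr rfl
    intro d' _
    apply sum_congr rfl
    intro f _
    ring
  have hmain : ∑ d ∈ D, ∑ d' ∈ D, wt d * wt d' *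
      (X * if d = d' then (Nat.totient d : ℝ) else 0) = X * G := by
    rw [hG, mul_sum]
    apply sum_congr rfl
    intro d hd
    rw [sum_eq_single d]
    · have h1 : (Nat.totient d : ℝ) ≠ 0 := by
        exact_mod_cast (Nat.totient_pos.2 (hDpos d hd)).ne'
      simp only [wt, if_true]
      field_simp
      linear_combination X * hmu2 d hd
    · intro d' _ hne
      simp [hne.symm]
    · exact fun h => absurd hd h
  have herr : ∑ f ∈ A, (∑ d ∈ D, wt d * ramanujanSum d f) ^ 2 - X * G ≤ Y ^ 6 := by
    rw [hexp, ← hmain, ← sum_sub_distrib]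
    have hcard : (D.card : ℝ) ≤ Y := by
      have : D ⊆ Finset.Icc 1 ⌊Y⌋₊ := by
        intro d hd
        rw [Finset.mem_Icc]
        exact ⟨hDpos d hd, Nat.le_floor (mem_filter.mp hd).2⟩
      have := card_le_card this
      rw [Nat.card_Icc, Nat.add_sub_cancel] at this
      exact (Nat.cast_le.2 this).trans (Nat.floor_le (by linarith))
    calc _ ≤ ∑ d ∈ D, ∑ d' ∈ D, (Y * Y) * (Y * Y) := by
          apply sum_le_sum
          intro d hd
          rw [← sum_sub_distrib]
          apply sum_le_sum
          intro d' hd'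
          rw [← mul_sub]
          refine (le_abs_self _).trans ?_
          rw [abs_mul, abs_mul]
          have h1 := abs_sum_ramanujanSum_mul_sub_le A (X := X) (hDpos d hd) (hDpos d' hd')
            (fun e he e' he' => h _ (Nat.lcm_dvd (he.trans (hDP d hd)) (he'.trans (hDP d' hd'))))
          have h2 : (d : ℝ) ≤ Y := (mem_filter.mp hd).2
          have h3 : (d' : ℝ) ≤ Y := (mem_filter.mp hd').2
          calc _ ≤ 1 * 1 * (((d : ℝ) * d) * (d' * d')) := by
                gcongr
                · exact hwt d hd
                · exact hwt d' hd'
            _ ≤ (Y * Y) * (Y * Y) := by rw [one_mul, one_mul]; gcongr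
      _ = (D.card * D.card : ℝ) * ((Y * Y) * (Y * Y)) := by
          rw [sum_const, sum_const, nsmul_eq_mul, nsmul_eq_mul]; ring
      _ ≤ (Y * Y) * ((Y * Y) * (Y * Y)) := by gcongr
      _ = Y ^ 6 := by ring
  have hN : ((A.filter fun f => Nat.Coprime P f).card : ℝ) * G * G ≤ (X + Y ^ 6) * G := by
    have : Y ^ 6 ≤ Y ^ 6 * G := le_mul_of_one_le_right (by positivity) hone
    nlinarith
  have := le_of_mul_le_mul_right hN (by linarith)
  refine le_trans ?_ this
  gcongr

end

/-- The members of `(x, x + q * J]` congruent to `u` modulo `q`. -/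
def apSet (q u x J : ℕ) : Finset ℕ := (Ioc x (x + q * J)).filter fun m => m ≡ u [MOD q]

theorem pos_of_mem_apSet {q u x J m : ℕ} (hm : m ∈ apSet q u x J) : 0 < m := by
  simp only [apSet, mem_filter, mem_Ioc] at hm
  omega

theorem coprime_of_mem_apSet {q u x J m : ℕ} (hu : u.Coprime q) (hm : m ∈ apSet q u x J) :
    m.Coprime q := by
  have := (mem_filter.mp hm).2.gcd_eq
  rw [Nat.coprime_iff_gcd_eq_one] at hu ⊢
  omega

theorem abs_card_dvd_apSet_sub_le {q u e : ℕ} (x J : ℕ) (hq : 0 < q) (he : 0 < e)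
    (heq : e.Coprime q) :
    |(((apSet q u x J).filter fun m => e ∣ m).card : ℝ) - J / e| ≤ 1 := by
  obtain ⟨v, hv1, hv2⟩ := Nat.chineseRemainder heq.symm u 0
  have hset : (apSet q u x J).filter (fun m => e ∣ m) =
      (Ioc x (x + q * J)).filter fun m => m ≡ v [MOD q * e] := by
    rw [apSet, filter_filter]
    apply filter_congr
    intro m _
    rw [← Nat.modEq_and_modEq_iff_modEq_mul heq.symm]
    constructor
    · rintro ⟨h1, h2⟩
      exact ⟨h1.trans hv1.symm, ((Nat.modEq_zero_iff_dvd).2 h2).trans hv2.symm⟩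
    · rintro ⟨h1, h2⟩
      exact ⟨h1.trans hv1, (Nat.modEq_zero_iff_dvd).1 (h2.trans hv2)⟩
  have hr : 0 < q * e := Nat.mul_pos hq he
  have hcard := Nat.Ioc_filter_modEq_card x (x + q * J) hr v
  rw [hset]
  set N := ((Ioc x (x + q * J)).filter fun m => m ≡ v [MOD q * e]).card
  set s : ℚ := (((x + q * J : ℕ) : ℚ) - v) / ((q * e : ℕ) : ℚ) with hs
  set t : ℚ := ((x : ℚ) - v) / ((q * e : ℕ) : ℚ) with ht
  have hq' : (q : ℚ) ≠ 0 := by exact_mod_cast hq.ne'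
  have he' : (e : ℚ) ≠ 0 := by exact_mod_cast he.ne'
  have hst : s - t = J / e := by
    rw [hs, ht]
    push_cast
    field_simp
    ring
  have hJe : (0 : ℚ) ≤ J / e := by positivity
  have hmono : ⌊t⌋ ≤ ⌊s⌋ := Int.floor_mono (by linarith)
  rw [max_eq_left (by linarith)] at hcard
  have hcard' : (N : ℚ) = ⌊s⌋ - ⌊t⌋ := by exact_mod_cast hcard
  have h1 := Int.floor_le s
  have h2 := Int.lt_floor_add_one s
  have h3 := Int.floor_le t
  have h4 := Int.lt_floor_add_one t
  have : |(N : ℚ) - J / e| ≤ 1 := by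
    rw [abs_le]
    constructor <;> linarith
  have hcast : ((|(N : ℚ) - J / e| : ℚ) : ℝ) ≤ ((1 : ℚ) : ℝ) := Rat.cast_le.2 this
  push_cast at hcast
  exact hcast

theorem card_sifted_apSet_mul_le {q u g : ℕ} (x J : ℕ) (hq : 0 < q) (hg : 0 < g)
    (hgq : g.Coprime q) {w Y : ℝ} (hw : 1 ≤ w) (hY : 1 < Y) (hwY : w ^ 4 ≤ Y)
    (hgY : (g : ℝ) ≤ Y) (hJ : Y ^ 7 ≤ J) :
    (((apSet q u x J).filter fun m => g ∣ m ∧ (sieveModulus q w).Coprime (m / g)).card : ℝ) *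
      sieveProd q w ≤ 4 * (J / g) := by
  set A := ((apSet q u x J).filter fun m => g ∣ m).image fun m => m / g with hA
  have hinj : ∀ T : Finset ℕ, (∀ m ∈ T, g ∣ m) → Set.InjOn (fun m => m / g) (T : Set ℕ) := by
    intro T hT m hm m' hm' h
    exact (Nat.div_left_inj (hT m hm) (hT m' hm')).1 h
  have hfil : ∀ (p : ℕ → Prop) [DecidablePred p], (A.filter p).card =
      ((apSet q u x J).filter fun m => g ∣ m ∧ p (m / g)).card := by
    intro p _
    rw [hA, filter_image, card_image_of_injOn, filter_filter]
    apply hinj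
    intro m hm
    exact (mem_filter.mp (mem_filter.mp hm).1).2
  have hg0 : (0 : ℝ) < g := by exact_mod_cast hg
  have hsieve := card_coprime_mul_sum_le A (squarefree_sieveModulus q w) (X := J / g) (Y := Y)
    hY.le (by
      intro e he
      have he0 : 0 < e := Nat.pos_of_dvd_of_pos he (sieveModulus_pos q w)
      have := abs_card_dvd_apSet_sub_le (u := u) x J hq (Nat.mul_pos hg he0)
        (Nat.Coprime.mul_left hgq ((sieveModulus_coprime q w).coprime_dvd_left he))
      rw [hfil]
      have hset : ((apSet q u x J).filter fun m => g ∣ m ∧ e ∣ m / g) =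
          (apSet q u x J).filter fun m => g * e ∣ m := by
        apply filter_congr
        intro m _
        constructor
        · rintro ⟨h1, h2⟩
          exact (Nat.dvd_div_iff_mul_dvd h1).1 h2
        · intro h
          have h1 := (Dvd.intro _ rfl).trans h
          exact ⟨h1, (Nat.dvd_div_iff_mul_dvd h1).2 h⟩
      rw [hset]
      push_cast at this
      rwa [div_div])
  rw [hfil] at hsieve
  have hQ := sieveProd_le_two_mul_sum q hw hY hwY
  have hY6 : Y ^ 6 ≤ J / g := by
    rw [le_div_iff₀ hg0]
    calc Y ^ 6 * g ≤ Y ^ 6 * Y := by gcongr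
      _ = Y ^ 7 := by ring
      _ ≤ J := hJ
  calc _ ≤ (((apSet q u x J).filter
          fun m => g ∣ m ∧ (sieveModulus q w).Coprime (m / g)).card : ℝ) *
        (2 * ∑ d ∈ (sieveModulus q w).divisors.filter (fun d : ℕ => (d : ℝ) ≤ Y),
          1 / (d : ℝ)) := by gcongr
    _ ≤ 2 * (J / g + Y ^ 6) := by linarith
    _ ≤ _ := by linarith

theorem sum_factored_rpow_le (q : ℕ) (w : ℝ) {β : ℝ} (hβ : β < 0) (S : Finset ℕ)
    (hS : ∀ n ∈ S, n ≠ 0 ∧ ∀ p, p.Prime → p ∣ n → p ∈ sievePrimes q w) :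
    ∑ n ∈ S, (n : ℝ) ^ β ≤ ∏ p ∈ sievePrimes q w, (1 - (p : ℝ) ^ β)⁻¹ := by
  let h : ℕ →* ℝ :=
    { toFun := fun n => (n : ℝ) ^ β
      map_one' := by simp
      map_mul' := fun m n => by
        simp only [Nat.cast_mul]
        exact Real.mul_rpow (by positivity) (by positivity) }
  have hlt : ∀ {p : ℕ}, p.Prime → ‖h p‖ < 1 := by
    intro p hp
    have : h p = (p : ℝ) ^ β := rfl
    rw [this, Real.norm_of_nonneg (by positivity)]
    exact Real.rpow_lt_one_of_one_lt_of_neg (by exact_mod_cast hp.one_lt) hβ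
  have hs := (EulerProduct.summable_and_hasSum_factoredNumbers_prod_filter_prime_geometric hlt
    (sievePrimes q w)).2
  rw [filter_true_of_mem (fun p hp => prime_of_mem_sievePrimes hp)] at hs
  have hmem : ∀ n ∈ S, n ∈ Nat.factoredNumbers (sievePrimes q w) := by
    intro n hn
    rw [Nat.mem_factoredNumbers']
    exact (hS n hn).2
  have := sum_le_hasSum (S.subtype (· ∈ Nat.factoredNumbers (sievePrimes q w)))
    (fun i _ => by
      have : h i = ((i : ℕ) : ℝ) ^ β := rfl
      rw [this]; positivity) hs
  rw [sum_subtype_of_mem (fun n : ℕ => h n) hmem] at this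
  exact this

theorem sum_card_divisors_mul_rpow_le (q : ℕ) (w : ℝ) {β : ℝ} (hβ : β < 0) (S : Finset ℕ)
    (hS : ∀ n ∈ S, n ≠ 0 ∧ ∀ p, p.Prime → p ∣ n → p ∈ sievePrimes q w) :
    ∑ n ∈ S, (n.divisors.card : ℝ) * (n : ℝ) ^ β ≤
      (∏ p ∈ sievePrimes q w, (1 - (p : ℝ) ^ β)⁻¹) ^ 2 := by
  set S' := S.biUnion Nat.divisors with hS'
  have hmem : ∀ n ∈ S', n ≠ 0 ∧ ∀ p, p.Prime → p ∣ n → p ∈ sievePrimes q w := by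
    intro n hn
    obtain ⟨m, hm, hnm⟩ := mem_biUnion.mp hn
    have hd := Nat.dvd_of_mem_divisors hnm
    exact ⟨ne_zero_of_dvd_ne_zero (hS m hm).1 hd,
      fun p hp hpn => (hS m hm).2 p hp (hpn.trans hd)⟩
  have h0 := sum_factored_rpow_le q w hβ S' hmem
  calc _ = ∑ n ∈ S, ∑ y ∈ n.divisorsAntidiagonal, (y.1 : ℝ) ^ β * (y.2 : ℝ) ^ β := by
        apply sum_congr rfl
        intro n _
        rw [Nat.sum_divisorsAntidiagonal (f := fun i j => (i : ℝ) ^ β * (j : ℝ) ^ β),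
          card_eq_sum_ones, Nat.cast_sum, sum_mul]
        apply sum_congr rfl
        intro d hd
        rw [← Real.mul_rpow (by positivity) (by positivity), ← Nat.cast_mul,
          Nat.mul_div_cancel' (Nat.dvd_of_mem_divisors hd), Nat.cast_one, one_mul]
    _ = ∑ y ∈ S.biUnion Nat.divisorsAntidiagonal, (y.1 : ℝ) ^ β * (y.2 : ℝ) ^ β := by
        rw [sum_biUnion]
        intro m _ n _ hmn
        rw [Function.onFun, disjoint_left]
        intro y hy hy'
        rw [Nat.mem_divisorsAntidiagonal] at hy hy'
        exact hmn (hy.1.symm.trans hy'.1)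
    _ ≤ ∑ y ∈ S' ×ˢ S', (y.1 : ℝ) ^ β * (y.2 : ℝ) ^ β := by
        apply sum_le_sum_of_subset_of_nonneg
        · intro y hy
          obtain ⟨n, hn, hy⟩ := mem_biUnion.mp hy
          rw [Nat.mem_divisorsAntidiagonal] at hy
          rw [mem_product]
          exact ⟨mem_biUnion.2 ⟨n, hn, Nat.mem_divisors.2 ⟨⟨y.2, hy.1.symm⟩, hy.2⟩⟩,
            mem_biUnion.2 ⟨n, hn, Nat.mem_divisors.2
              ⟨⟨y.1, by rw [← hy.1, mul_comm]⟩, hy.2⟩⟩⟩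
        · intro y _ _
          positivity
    _ = (∑ n ∈ S', (n : ℝ) ^ β) ^ 2 := by
        rw [sq, sum_mul_sum, sum_product]
    _ ≤ _ := by
        gcongr

theorem inv_one_sub_rpow_le_exp {p : ℕ} (hp : 2 ≤ p) {α K : ℝ} (hα : 0 ≤ α) (hα' : α ≤ 1 / 4)
    (hK : α * Real.log p ≤ K) :
    (1 - (p : ℝ) ^ (α - 1))⁻¹ ≤ Real.exp (1 / (p : ℝ) + Real.exp K * α * (Real.log p / p) +
      3 * (p : ℝ) ^ (-(3 / 2) : ℝ)) := by
  have hp2 : (2 : ℝ) ≤ p := by exact_mod_cast hp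
  have hp0 : (0 : ℝ) < p := by linarith
  set y := (p : ℝ) ^ (α - 1) with hy
  have hy0 : 0 < y := by positivity
  have hy6 : y ≤ 3 / 5 := by
    have h1 : y ≤ (2 : ℝ) ^ (-(3 / 4) : ℝ) := by
      calc y ≤ (p : ℝ) ^ (-(3 / 4) : ℝ) :=
            Real.rpow_le_rpow_of_exponent_le (by linarith) (by linarith)
        _ ≤ _ := Real.rpow_le_rpow_of_nonpos (by norm_num) hp2 (by norm_num)
    refine h1.trans ?_
    have h2 : ((2 : ℝ) ^ (-(3 / 4) : ℝ)) ^ 4 ≤ (3 / 5 : ℝ) ^ 4 := by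
      rw [← Real.rpow_natCast, ← Real.rpow_mul (by norm_num)]
      norm_num
    exact le_of_pow_le_pow_left₀ (by norm_num) (by norm_num) h2
  have hy2 : y ^ 2 ≤ (p : ℝ) ^ (-(3 / 2) : ℝ) := by
    rw [hy, ← Real.rpow_natCast, ← Real.rpow_mul hp0.le]
    exact Real.rpow_le_rpow_of_exponent_le (by linarith) (by push_cast; linarith)
  have hlog : 0 ≤ Real.log p := Real.log_nonneg (by linarith)
  have hyp : y ≤ 1 / p + Real.exp K * α * (Real.log p / p) := by
    have h1 : y = Real.exp (α * Real.log p) / p := by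
      rw [hy, Real.rpow_sub hp0, Real.rpow_one, Real.rpow_def_of_pos hp0, mul_comm]
    set t := α * Real.log p with ht
    have ht0 : 0 ≤ t := by positivity
    have h2 : Real.exp t ≤ 1 + t * Real.exp t := by
      have h3 := Real.add_one_le_exp (-t)
      have h4 : Real.exp (-t) * Real.exp t = 1 := by rw [← Real.exp_add]; simp
      nlinarith [Real.exp_pos t]
    have h5 : Real.exp t ≤ 1 + t * Real.exp K := by
      refine h2.trans ?_
      gcongr
    rw [h1]
    calc Real.exp t / p ≤ (1 + t * Real.exp K) / p := by gcongr
      _ = _ := by rw [ht]; ring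
  have hfrac : y / (1 - y) ≤ y + 5 / 2 * y ^ 2 := by
    rw [div_le_iff₀ (by linarith)]
    nlinarith [mul_nonneg (sq_nonneg y) (by linarith : (0 : ℝ) ≤ 3 / 5 - y)]
  calc (1 - y)⁻¹ = y / (1 - y) + 1 := by
        have : 1 - y ≠ 0 := by linarith
        field_simp
        ring
    _ ≤ Real.exp (y / (1 - y)) := Real.add_one_le_exp _
    _ ≤ _ := by
        apply Real.exp_le_exp.2
        have : 0 ≤ (p : ℝ) ^ (-(3 / 2) : ℝ) := by positivity
        linarith

theorem exp_one_div_le {p : ℕ} (hp : 2 ≤ p) :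
    Real.exp (1 / (p : ℝ)) ≤ (1 + 1 / (p : ℝ)) * Real.exp ((p : ℝ) ^ (-(3 / 2) : ℝ)) := by
  have hp2 : (2 : ℝ) ≤ p := by exact_mod_cast hp
  have hp0 : (0 : ℝ) < p := by linarith
  have h1 : Real.exp (1 / ((p : ℝ) + 1)) ≤ 1 + 1 / p := by
    have := Real.one_sub_inv_le_log_of_pos (by positivity : (0 : ℝ) < 1 + 1 / p)
    rw [← Real.le_log_iff_exp_le (by positivity)]
    refine le_trans (le_of_eq ?_) this
    field_simp
    ring
  have h2 : 1 / (p : ℝ) - 1 / (p + 1) ≤ (p : ℝ) ^ (-(3 / 2) : ℝ) := by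
    calc 1 / (p : ℝ) - 1 / (p + 1) ≤ (p : ℝ) ^ (-2 : ℝ) := by
          rw [Real.rpow_neg hp0.le, Real.rpow_two, div_sub_div _ _ hp0.ne' (by positivity),
            ← one_div, div_le_div_iff₀ (by positivity) (by positivity)]
          nlinarith
      _ ≤ _ := Real.rpow_le_rpow_of_exponent_le (by linarith) (by norm_num)
  calc Real.exp (1 / (p : ℝ)) ≤
        Real.exp (1 / ((p : ℝ) + 1) + (p : ℝ) ^ (-(3 / 2) : ℝ)) :=
        Real.exp_le_exp.2 (by linarith)
    _ = Real.exp (1 / ((p : ℝ) + 1)) * Real.exp ((p : ℝ) ^ (-(3 / 2) : ℝ)) := Real.exp_add _ _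
    _ ≤ _ := by gcongr

theorem prod_inv_one_sub_rpow_le (K : ℝ) :
    ∃ C : ℝ, 0 < C ∧ ∀ (q : ℕ) (w w' α : ℝ), 1 < w' → w' ≤ w → w ≤ w' ^ 2 → 0 ≤ α → α ≤ 1 / 4 →
      α * Real.log w ≤ K →
      ∏ p ∈ sievePrimes q w, (1 - (p : ℝ) ^ (α - 1))⁻¹ ≤ C * sieveProd q w' := by
  have hsum : Summable fun n : ℕ => (n : ℝ) ^ (-(3 / 2) : ℝ) :=
    Real.summable_nat_rpow.2 (by norm_num)
  set T := ∑' n : ℕ, (n : ℝ) ^ (-(3 / 2) : ℝ) with hT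
  refine ⟨Real.exp (2 * Real.exp K * K + 4 + 4 * T), Real.exp_pos _, ?_⟩
  intro q w w' α hw' hww hww2 hα hα' hK
  have hw : 1 < w := by linarith
  have hlw' : 0 < Real.log w' := Real.log_pos hw'
  have hlw : 0 < Real.log w := Real.log_pos hw
  have hterm : ∀ p ∈ sievePrimes q w, (1 - (p : ℝ) ^ (α - 1))⁻¹ ≤
      (if (p : ℝ) ≤ w' then 1 + 1 / (p : ℝ) else 1) *
        Real.exp ((Real.exp K * α + 1 / Real.log w') * (Real.log p / p) +
          4 * (p : ℝ) ^ (-(3 / 2) : ℝ)) := by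
    intro p hp
    obtain ⟨hpw, hp', -⟩ := (mem_sievePrimes (by linarith)).1 hp
    have hp2 : (2 : ℝ) ≤ p := by exact_mod_cast hp'.two_le
    have hlp : 0 < Real.log p := Real.log_pos (by linarith)
    have h1 := inv_one_sub_rpow_le_exp hp'.two_le hα hα' (K := K) (le_trans (by gcongr) hK)
    refine h1.trans ?_
    have hpos : 0 ≤ (p : ℝ) ^ (-(3 / 2) : ℝ) := by positivity
    split_ifs with hpw'
    · rw [add_assoc, Real.exp_add]
      calc _ ≤ (1 + 1 / (p : ℝ)) * Real.exp ((p : ℝ) ^ (-(3 / 2) : ℝ)) *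
            Real.exp (Real.exp K * α * (Real.log p / p) + 3 * (p : ℝ) ^ (-(3 / 2) : ℝ)) := by
            gcongr
            exact exp_one_div_le hp'.two_le
        _ = (1 + 1 / (p : ℝ)) * Real.exp (Real.exp K * α * (Real.log p / p) +
              4 * (p : ℝ) ^ (-(3 / 2) : ℝ)) := by
            rw [mul_assoc, ← Real.exp_add]
            congr 2
            ring
        _ ≤ _ := by
            gcongr
            have : 0 ≤ 1 / Real.log w' := by positivity
            linarith
    · rw [one_mul]
      apply Real.exp_le_exp.2
      push Not at hpw'
      have h3 : 1 / (p : ℝ) ≤ 1 / Real.log w' * (Real.log p / p) := by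
        rw [div_mul_div_comm, one_mul, div_le_div_iff₀ (by positivity) (by positivity), one_mul]
        gcongr
      linarith
  refine (prod_le_prod (fun p hp => ?_) hterm).trans ?_
  · have hp' := prime_of_mem_sievePrimes hp
    have : (p : ℝ) ^ (α - 1) < 1 :=
      Real.rpow_lt_one_of_one_lt_of_neg (by exact_mod_cast hp'.one_lt) (by linarith)
    exact inv_nonneg.2 (by linarith)
  rw [prod_mul_distrib, ← Real.exp_sum, mul_comm]
  have hprod : ∏ p ∈ sievePrimes q w, (if (p : ℝ) ≤ w' then 1 + 1 / (p : ℝ) else 1) =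
      sieveProd q w' := by
    rw [← prod_filter]
    apply prod_congr _ fun _ _ => rfl
    ext p
    rw [mem_filter, mem_sievePrimes (by linarith), mem_sievePrimes (by linarith)]
    constructor
    · rintro ⟨⟨-, h2⟩, h3⟩; exact ⟨h3, h2⟩
    · rintro ⟨h1, h2⟩; exact ⟨⟨h1.trans hww, h2⟩, h1⟩
  rw [hprod]
  have hQ0 : 0 ≤ sieveProd q w' := Finset.prod_nonneg fun p _ => by positivity
  gcongr
  rw [sum_add_distrib, ← mul_sum, ← mul_sum]
  have h1 := sum_sievePrimes_log_div_le q hw.le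
  have h2 : ∑ p ∈ sievePrimes q w, (p : ℝ) ^ (-(3 / 2) : ℝ) ≤ T :=
    hsum.sum_le_tsum _ fun n _ => by positivity
  have h3 : Real.log w ≤ 2 * Real.log w' := by
    have := Real.log_le_log (by linarith) hww2
    rwa [Real.log_pow] at this
  have h4 : (Real.exp K * α + 1 / Real.log w') * ∑ p ∈ sievePrimes q w, Real.log p / p ≤
      2 * Real.exp K * K + 4 := by
    calc _ ≤ (Real.exp K * α + 1 / Real.log w') * (2 * Real.log w) := by gcongr
      _ = 2 * Real.exp K * (α * Real.log w) + 2 * (Real.log w / Real.log w') := by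
          field_simp
      _ ≤ 2 * Real.exp K * K + 2 * 2 := by
          gcongr
          rw [div_le_iff₀ hlw']
          exact h3
      _ = _ := by ring
  linarith

/-- All prime factors of `n` are at most `w`. -/
def IsSmooth (w : ℝ) (n : ℕ) : Prop := ∀ p : ℕ, p.Prime → p ∣ n → (p : ℝ) ≤ w

/-- All prime factors of `n` exceed `w`. -/
def IsRough (w : ℝ) (n : ℕ) : Prop := ∀ p : ℕ, p.Prime → p ∣ n → w < (p : ℝ)

theorem card_divisors_mul_le (m n : ℕ) :
    ((m * n).divisors.card : ℝ) ≤ m.divisors.card * n.divisors.card := by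
  rw [Nat.divisors_mul]
  exact_mod_cast Finset.card_mul_le

theorem card_divisors_le_of_dvd {m n : ℕ} (h : n ∣ m) :
    (m.divisors.card : ℝ) ≤ n.divisors.card * (m / n).divisors.card := by
  conv_lhs => rw [← Nat.mul_div_cancel' h]
  exact card_divisors_mul_le _ _

theorem IsRough.card_divisors_le_rpow {w c : ℝ} (hw : 0 ≤ w) (hc : 0 ≤ c) (h : 2 ≤ w ^ c)
    {f : ℕ} (hf : f ≠ 0) (hr : IsRough w f) : (f.divisors.card : ℝ) ≤ (f : ℝ) ^ c := by
  induction f using induction_on_primes with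
  | zero => exact absurd rfl hf
  | one => simp
  | prime_mul p a hp ih =>
    have ha : a ≠ 0 := by rintro rfl; simp at hf
    have h1 := ih ha fun r hr1 hr2 => hr r hr1 (hr2.mul_left p)
    have h2 : w < p := hr p hp (Dvd.intro a rfl)
    have h3 : w ^ c ≤ (p : ℝ) ^ c := Real.rpow_le_rpow hw h2.le hc
    have h4 : (p.divisors.card : ℝ) = 2 := by
      rw [hp.divisors, Finset.card_pair hp.one_lt.ne]
      norm_num
    push_cast
    rw [Real.mul_rpow (by positivity) (by positivity)]
    calc ((p * a).divisors.card : ℝ) ≤ p.divisors.card * a.divisors.card :=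
          card_divisors_mul_le _ _
      _ ≤ (p : ℝ) ^ c * (a : ℝ) ^ c := by
          rw [h4]
          exact mul_le_mul (h.trans h3) h1 (by positivity) (by positivity)

theorem IsRough.card_divisors_le_exp {w T L : ℝ} (hw : 1 < w) {f : ℕ} (hf : f ≠ 0)
    (hr : IsRough w f) (hfL : Real.log f ≤ L) (hT : L ≤ T * Real.log w) (hT0 : 0 ≤ T) :
    (f.divisors.card : ℝ) ≤ Real.exp T := by
  have hlw : 0 < Real.log w := Real.log_pos hw
  have hl2 : 0 < Real.log 2 := Real.log_pos (by norm_num)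
  have hl2' : Real.log 2 ≤ 1 := by
    have := Real.log_le_sub_one_of_pos (show (0 : ℝ) < 2 by norm_num)
    linarith
  have hf0 : (0 : ℝ) < f := by positivity
  refine (hr.card_divisors_le_rpow (c := Real.log 2 / Real.log w) (by linarith)
    (by positivity) ?_ hf).trans ?_
  · rw [Real.rpow_def_of_pos (by linarith), mul_div_cancel₀ _ hlw.ne', Real.exp_log (by norm_num)]
  · rw [Real.rpow_def_of_pos hf0]
    apply Real.exp_le_exp.2
    calc Real.log f * (Real.log 2 / Real.log w)
        ≤ (T * Real.log w) * (Real.log 2 / Real.log w) := by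
          gcongr
          linarith
      _ = T * Real.log 2 := by field_simp
      _ ≤ T := by nlinarith

theorem exists_maximal_smooth_dvd {m e : ℕ} {W Y : ℝ} (hm : m ≠ 0) (hem : e ∣ m)
    (he : IsSmooth W e) (heY : (e : ℝ) ≤ Y) :
    ∃ g, e ∣ g ∧ g ∣ m ∧ IsSmooth W g ∧ (g : ℝ) ≤ Y ∧
      ∀ p : ℕ, p.Prime → p ∣ m / g → (p : ℝ) ≤ W → Y < g * p := by
  classical
  obtain ⟨g, hg, hmax⟩ := Finset.exists_max_image
    (m.divisors.filter fun g => e ∣ g ∧ IsSmooth W g ∧ (g : ℝ) ≤ Y) id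
    ⟨e, by simp [hem, hm, he, heY]⟩
  simp only [mem_filter, Nat.mem_divisors] at hg hmax
  obtain ⟨⟨hgm, -⟩, heg, hgs, hgY⟩ := hg
  refine ⟨g, heg, hgm, hgs, hgY, fun p hp hpm hpW => ?_⟩
  by_contra! hcon
  have hdvd : g * p ∣ m := by
    rw [← Nat.mul_div_cancel' hgm]
    exact Nat.mul_dvd_mul_left g hpm
  have hle := hmax (g * p) ⟨⟨hdvd, hm⟩, heg.mul_right p, fun r hr hrd => ?_, by
    push_cast; exact hcon⟩
  · have hg0 : 0 < g := Nat.pos_of_dvd_of_pos hgm (Nat.pos_of_ne_zero hm)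
    have := hp.two_le
    simp only [id] at hle
    nlinarith
  · rcases (Nat.Prime.dvd_mul hr).1 hrd with h | h
    · exact hgs r hr h
    · rw [(Nat.prime_dvd_prime_iff_eq hr hp).1 h]
      exact hpW

theorem isSmooth_one (W : ℝ) : IsSmooth W 1 := fun p hp h => by
  exact absurd (Nat.dvd_one.1 h) hp.one_lt.ne'

theorem exists_smooth_dvd_rough {m : ℕ} (W : ℝ) (hm : m ≠ 0) :
    ∃ g, g ∣ m ∧ IsSmooth W g ∧ IsRough W (m / g) := by
  obtain ⟨g, -, hgm, hgs, -, h⟩ := exists_maximal_smooth_dvd (Y := m) hm (one_dvd m)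
    (isSmooth_one W) (by exact_mod_cast Nat.one_le_iff_ne_zero.2 hm)
  refine ⟨g, hgm, hgs, fun p hp hpm => ?_⟩
  by_contra! hcon
  have h1 := h p hp hpm hcon
  have hdvd : g * p ∣ m := by
    rw [← Nat.mul_div_cancel' hgm]
    exact Nat.mul_dvd_mul_left g hpm
  have h2 : ((g * p : ℕ) : ℝ) ≤ m := by exact_mod_cast Nat.le_of_dvd (Nat.pos_of_ne_zero hm) hdvd
  push_cast at h2
  linarith

theorem exists_smooth_dvd_cases {W : ℕ → ℝ} {Y : ℝ} (hW : Antitone W) (hW2 : ∃ r, W r < 2)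
    (hY : 1 ≤ Y) {m : ℕ} (hm : m ≠ 0) :
    (∃ g, g ∣ m ∧ (g : ℝ) ≤ Y ∧ IsSmooth (W 0) g ∧ IsRough (W 0) (m / g)) ∨
    ∃ r g, g ∣ m ∧ (g : ℝ) ≤ Y ∧ Y < g * W r ∧ IsSmooth (W r) g ∧
      IsRough (W (r + 1)) (m / g) := by
  classical
  have hex : ∃ r, ∃ g, g ∣ m ∧ (g : ℝ) ≤ Y ∧ IsSmooth (W r) g ∧ IsRough (W r) (m / g) := by
    obtain ⟨r, hr⟩ := hW2
    refine ⟨r, 1, one_dvd m, by simpa using hY, isSmooth_one _, fun p hp _ => ?_⟩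
    have : (2 : ℝ) ≤ p := by exact_mod_cast hp.two_le
    linarith
  obtain ⟨e, hem, heY, hes, her⟩ := Nat.find_spec hex
  rcases hN : Nat.find hex with _ | r
  · left
    rw [hN] at hes her
    exact ⟨e, hem, heY, hes, her⟩
  · right
    rw [hN] at hes her
    obtain ⟨g, heg, hgm, hgs, hgY, h⟩ := exists_maximal_smooth_dvd (W := W r) hm hem
      (fun p hp hpe => (hes p hp hpe).trans (hW (Nat.le_succ r))) heY
    refine ⟨r, g, hgm, hgY, ?_, hgs, fun p hp hpm => her p hp ?_⟩
    · have hnot := Nat.find_min hex (m := r) (by omega)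
      have hnr : ¬ IsRough (W r) (m / g) := fun hr => hnot ⟨g, hgm, hgY, hgs, hr⟩
      simp only [IsRough, not_forall, not_lt] at hnr
      obtain ⟨p, hp, hpm, hpW⟩ := hnr
      exact (h p hp hpm hpW).trans_le (by gcongr)
    · exact hpm.trans (Nat.div_dvd_div_left hgm heg)

theorem IsSmooth.mem_sievePrimes {q g p : ℕ} {W : ℝ} (hW : 0 ≤ W) (hg : IsSmooth W g)
    (hgq : g.Coprime q) (hp : p.Prime) (hpg : p ∣ g) : p ∈ sievePrimes q W := by
  rw [_root_.mem_sievePrimes hW]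
  refine ⟨hg p hp hpg, hp, fun h => ?_⟩
  exact hp.one_lt.ne' (Nat.dvd_one.1 (hgq ▸ Nat.dvd_gcd hpg h))

theorem IsRough.coprime_sieveModulus {q f : ℕ} {W : ℝ} (hW : 0 ≤ W) (hf : IsRough W f) :
    (sieveModulus q W).Coprime f := by
  refine Nat.Coprime.prod_left fun p hp => ?_
  have h := (_root_.mem_sievePrimes hW).1 hp
  rw [Nat.Prime.coprime_iff_not_dvd h.2.1]
  intro hpf
  linarith [hf p h.2.1 hpf, h.1]

theorem card_divisors_le_rpow {ε : ℝ} (hε : 0 < ε) :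
    ∃ C, 0 < C ∧ ∀ m : ℕ, m ≠ 0 → (m.divisors.card : ℝ) ≤ C * (m : ℝ) ^ ε := by
  set w : ℝ := 2 ^ (1 / ε) with hw
  have hw0 : 0 < w := by positivity
  set P : ℝ := (∏ p ∈ sievePrimes 1 w, (1 - (p : ℝ) ^ (-ε))⁻¹) ^ 2 with hP
  refine ⟨P + 1, by positivity, fun m hm => ?_⟩
  obtain ⟨g, hgm, hgs, hgr⟩ := exists_smooth_dvd_rough w hm
  have hg0 : g ≠ 0 := by rintro rfl; exact hm (Nat.eq_zero_of_zero_dvd hgm)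
  have hf0 : m / g ≠ 0 := (Nat.div_pos (Nat.le_of_dvd (Nat.pos_of_ne_zero hm) hgm)
    (Nat.pos_of_ne_zero hg0)).ne'
  have h1 := sum_card_divisors_mul_rpow_le 1 w (β := -ε) (by linarith) {g} (by
    intro n hn
    rw [mem_singleton] at hn
    subst hn
    exact ⟨hg0, fun p hp hpn => hgs.mem_sievePrimes hw0.le (Nat.coprime_one_right _) hp hpn⟩)
  rw [sum_singleton, ← hP] at h1
  have h2 : (g.divisors.card : ℝ) ≤ P * (g : ℝ) ^ ε := by
    have hgp : (0 : ℝ) < g := by positivity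
    rw [Real.rpow_neg hgp.le, ← div_eq_mul_inv, div_le_iff₀ (by positivity)] at h1
    exact h1
  have h3 : ((m / g).divisors.card : ℝ) ≤ ((m / g : ℕ) : ℝ) ^ ε := by
    refine hgr.card_divisors_le_rpow hw0.le hε.le ?_ hf0
    rw [hw, ← Real.rpow_mul (by norm_num), one_div_mul_cancel hε.ne', Real.rpow_one]
  have hP0 : 0 ≤ P := sq_nonneg _
  calc (m.divisors.card : ℝ) ≤ g.divisors.card * (m / g).divisors.card :=
        card_divisors_le_of_dvd hgm
    _ ≤ (P * (g : ℝ) ^ ε) * ((m / g : ℕ) : ℝ) ^ ε := by gcongr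
    _ = P * (m : ℝ) ^ ε := by
        rw [mul_assoc, ← Real.mul_rpow (by positivity) (by positivity), ← Nat.cast_mul,
          Nat.mul_div_cancel' hgm]
    _ ≤ (P + 1) * (m : ℝ) ^ ε := by gcongr; linarith

theorem sum_card_divisors_mul_sieveProd_le {q u x J : ℕ} (hq : 0 < q)
    {w Y D : ℝ} (hw : 1 ≤ w) (hY : 1 < Y) (hwY : w ^ 4 ≤ Y) (hJ : Y ^ 7 ≤ J) (hD : 0 ≤ D)
    (S G : Finset ℕ) (hS : S ⊆ apSet q u x J)
    (hG : ∀ g ∈ G, 0 < g ∧ (g : ℝ) ≤ Y ∧ g.Coprime q)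
    (hSG : ∀ m ∈ S, ∃ g ∈ G, g ∣ m ∧ IsRough w (m / g) ∧ ((m / g).divisors.card : ℝ) ≤ D) :
    (∑ m ∈ S, (m.divisors.card : ℝ)) * sieveProd q w ≤
      4 * J * D * ∑ g ∈ G, (g.divisors.card : ℝ) * (g : ℝ) ^ (-1 : ℝ) := by
  classical
  set F : ℕ → Finset ℕ := fun g =>
    (apSet q u x J).filter fun m => g ∣ m ∧ (sieveModulus q w).Coprime (m / g)
  have hQ : 0 ≤ sieveProd q w := prod_nonneg fun p _ => by positivity
  have h1 : ∑ m ∈ S, (m.divisors.card : ℝ) ≤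
      ∑ g ∈ G, ((F g).card : ℝ) * (g.divisors.card * D) := by
    calc ∑ m ∈ S, (m.divisors.card : ℝ)
        ≤ ∑ m ∈ S, ∑ g ∈ G, if m ∈ F g then (g.divisors.card * D : ℝ) else 0 := by
          apply sum_le_sum
          intro m hm
          obtain ⟨g, hg, hgm, hr, hd⟩ := hSG m hm
          have hmF : m ∈ F g := by
            simp only [F, mem_filter]
            exact ⟨hS hm, hgm, hr.coprime_sieveModulus (by linarith)⟩
          calc (m.divisors.card : ℝ) ≤ g.divisors.card * (m / g).divisors.card :=
                card_divisors_le_of_dvd hgm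
            _ ≤ g.divisors.card * D := by gcongr
            _ = if m ∈ F g then (g.divisors.card * D : ℝ) else 0 := by rw [if_pos hmF]
            _ ≤ _ := single_le_sum (f := fun g => if m ∈ F g then (g.divisors.card * D : ℝ) else 0)
                (fun i _ => by split_ifs <;> positivity) hg
      _ = ∑ g ∈ G, ∑ m ∈ S, if m ∈ F g then (g.divisors.card * D : ℝ) else 0 := sum_comm
      _ ≤ ∑ g ∈ G, ((F g).card : ℝ) * (g.divisors.card * D) := by
          apply sum_le_sum
          intro g _
          rw [← sum_filter, sum_const, nsmul_eq_mul]
          gcongr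
          intro m hm
          exact (mem_filter.1 hm).2
  calc (∑ m ∈ S, (m.divisors.card : ℝ)) * sieveProd q w
      ≤ (∑ g ∈ G, ((F g).card : ℝ) * (g.divisors.card * D)) * sieveProd q w := by gcongr
    _ = ∑ g ∈ G, (((F g).card : ℝ) * sieveProd q w) * (g.divisors.card * D) := by
        rw [sum_mul]
        exact sum_congr rfl fun g _ => by ring
    _ ≤ ∑ g ∈ G, (4 * (J / g)) * (g.divisors.card * D) := by
        apply sum_le_sum
        intro g hg
        obtain ⟨hg0, hgY, hgq⟩ := hG g hg
        exact mul_le_mul_of_nonneg_right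
          (card_sifted_apSet_mul_le x J hq hg0 hgq hw hY hwY hgY hJ) (by positivity)
    _ = _ := by
        rw [mul_sum]
        refine sum_congr rfl fun g _ => ?_
        rw [Real.rpow_neg_one]
        ring

theorem sieveProd_le_log (q : ℕ) {w Y : ℝ} (hw : 1 ≤ w) (hY : 1 < Y) (hwY : w ^ 4 ≤ Y) :
    sieveProd q w ≤ 2 * (1 + Real.log Y) := by
  refine (sieveProd_le_two_mul_sum q hw hY hwY).trans ?_
  gcongr
  have h1 : ∑ d ∈ (sieveModulus q w).divisors.filter (fun d : ℕ => (d : ℝ) ≤ Y), 1 / (d : ℝ) ≤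
      ∑ d ∈ Icc 1 ⌊Y⌋₊, 1 / (d : ℝ) := by
    apply sum_le_sum_of_subset_of_nonneg
    · intro d hd
      simp only [mem_filter, Nat.mem_divisors] at hd
      rw [mem_Icc]
      exact ⟨Nat.pos_of_dvd_of_pos hd.1.1 (Nat.pos_of_ne_zero hd.1.2), Nat.le_floor hd.2⟩
    · intros; positivity
  refine h1.trans ?_
  have h2 := harmonic_floor_le_one_add_log Y hY.le
  rw [harmonic_eq_sum_Icc] at h2
  push_cast at h2
  simpa only [one_div] using h2

theorem sieveProd_pos (q : ℕ) (w : ℝ) : 0 < sieveProd q w :=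
  prod_pos fun p _ => by positivity

theorem sum_card_divisors_class_le (K : ℝ) : ∃ C, 0 < C ∧ ∀ (q u x J : ℕ), 0 < q →
    u.Coprime q → ∀ (w w' Y D : ℝ), 1 < w' → w' ≤ w → w ≤ w' ^ 2 → 1 < Y → w ^ 4 ≤ Y → Y ^ 7 ≤ J →
    0 ≤ D → ∀ α, 0 ≤ α → α ≤ 1 / 4 → α * Real.log w ≤ K → ∀ V : ℝ, 0 < V →
    ∀ S ⊆ apSet q u x J,
    (∀ m ∈ S, ∃ g, g ∣ m ∧ (g : ℝ) ≤ Y ∧ V ≤ g ∧ IsSmooth w g ∧ IsRough w' (m / g) ∧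
      ((m / g).divisors.card : ℝ) ≤ D) →
    ∑ m ∈ S, (m.divisors.card : ℝ) ≤ C * J * D * V ^ (-α) * (1 + Real.log Y) := by
  classical
  obtain ⟨C, hC, hprod⟩ := prod_inv_one_sub_rpow_le K
  refine ⟨8 * C ^ 2, by positivity, ?_⟩
  intro q u x J hq hu w w' Y D hw' hww hww2 hY hwY hJ hD α hα hα4 hαK V hV S hS hSg
  set G := (range (⌊Y⌋₊ + 1)).filter fun g : ℕ =>
    0 < g ∧ (g : ℝ) ≤ Y ∧ V ≤ g ∧ IsSmooth w g ∧ g.Coprime q with hG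
  have hw'Y : w' ^ 4 ≤ Y := (by gcongr : w' ^ 4 ≤ w ^ 4).trans hwY
  have h1 := sum_card_divisors_mul_sieveProd_le hq hw'.le hY hw'Y hJ hD S G hS
    (fun g hg => by
      simp only [hG, mem_filter] at hg
      tauto) (fun m hm => by
      obtain ⟨g, hgm, hgY, hgV, hgs, hgr, hgD⟩ := hSg m hm
      have hmpos := pos_of_mem_apSet (hS hm)
      refine ⟨g, ?_, hgm, hgr, hgD⟩
      simp only [hG, mem_filter, mem_range]
      exact ⟨Nat.lt_succ_of_le (Nat.le_floor hgY), Nat.pos_of_dvd_of_pos hgm hmpos, hgY, hgV, hgs,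
        (coprime_of_mem_apSet hu (hS hm)).coprime_dvd_left hgm⟩)
  have h2 : ∑ g ∈ G, (g.divisors.card : ℝ) * (g : ℝ) ^ (-1 : ℝ) ≤
      V ^ (-α) * (C * sieveProd q w') ^ 2 := by
    have h3 := sum_card_divisors_mul_rpow_le q w (β := α - 1) (by linarith) G (by
      intro g hg
      simp only [hG, mem_filter] at hg
      exact ⟨hg.2.1.ne', fun p hp hpg =>
        hg.2.2.2.2.1.mem_sievePrimes (by linarith) hg.2.2.2.2.2 hp hpg⟩)
    calc ∑ g ∈ G, (g.divisors.card : ℝ) * (g : ℝ) ^ (-1 : ℝ)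
        ≤ ∑ g ∈ G, V ^ (-α) * ((g.divisors.card : ℝ) * (g : ℝ) ^ (α - 1)) := by
          apply sum_le_sum
          intro g hg
          simp only [hG, mem_filter] at hg
          have hg0 : (0 : ℝ) < g := by exact_mod_cast hg.2.1
          have : (g : ℝ) ^ (-1 : ℝ) = (g : ℝ) ^ (-α) * (g : ℝ) ^ (α - 1) := by
            rw [← Real.rpow_add hg0]
            congr 1
            ring
          rw [this, mul_left_comm]
          gcongr ?_ * _
          exact Real.rpow_le_rpow_of_nonpos hV hg.2.2.2.1 (by linarith)
      _ = V ^ (-α) * ∑ g ∈ G, ((g.divisors.card : ℝ) * (g : ℝ) ^ (α - 1)) := by rw [mul_sum]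
      _ ≤ V ^ (-α) * (C * sieveProd q w') ^ 2 := by
          gcongr
          refine h3.trans ?_
          have h4 := hprod q w w' α hw' hww hww2 hα hα4 hαK
          have h5 : 0 ≤ ∏ p ∈ sievePrimes q w, (1 - (p : ℝ) ^ (α - 1))⁻¹ := by
            apply prod_nonneg
            intro p hp
            rw [inv_nonneg, sub_nonneg]
            apply Real.rpow_le_one_of_one_le_of_nonpos _ (by linarith)
            exact_mod_cast (prime_of_mem_sievePrimes hp).one_lt.le
          gcongr
  have hQ := sieveProd_pos q w'
  have hQ2 := sieveProd_le_log q hw'.le hY hw'Y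
  have h6 : (∑ m ∈ S, (m.divisors.card : ℝ)) * sieveProd q w' ≤
      (4 * J * D * V ^ (-α) * C ^ 2 * sieveProd q w') * sieveProd q w' := by
    refine h1.trans ?_
    calc 4 * J * D * ∑ g ∈ G, (g.divisors.card : ℝ) * (g : ℝ) ^ (-1 : ℝ)
        ≤ 4 * J * D * (V ^ (-α) * (C * sieveProd q w') ^ 2) := by gcongr
      _ = _ := by ring
  refine (le_of_mul_le_mul_right h6 hQ).trans ?_
  calc 4 * J * D * V ^ (-α) * C ^ 2 * sieveProd q w'
      ≤ 4 * J * D * V ^ (-α) * C ^ 2 * (2 * (1 + Real.log Y)) := by gcongr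
    _ = _ := by ring

theorem sum_card_divisors_smooth_class_le (W : ℝ) (hW : 1 ≤ W) {ε : ℝ} (hε : 0 < ε) :
    ∃ C, 0 < C ∧ ∀ (q u x J : ℕ), 0 < q → u.Coprime q → ∀ (Y N : ℝ), 1 < Y → Y ≤ J →
    0 < N → N ^ ε ≤ Y ^ (1 / 4 : ℝ) →
    ∀ S ⊆ apSet q u x J, (∀ m ∈ S, (m : ℝ) ≤ N) →
    (∀ m ∈ S, ∃ g, g ∣ m ∧ (g : ℝ) ≤ Y ∧ Y ≤ g * W ∧ IsSmooth W g) →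
    ∑ m ∈ S, (m.divisors.card : ℝ) ≤ C * J := by
  classical
  obtain ⟨C, hC, hdiv⟩ := card_divisors_le_rpow hε
  set P := ∏ p ∈ (range (⌊W⌋₊ + 1)).filter Nat.Prime, (1 - (p : ℝ) ^ (-(3 / 4) : ℝ))⁻¹ with hP
  have hfac : ∀ p : ℕ, p.Prime → 1 ≤ (1 - (p : ℝ) ^ (-(3 / 4) : ℝ))⁻¹ := by
    intro p hp
    have hp1 : (1 : ℝ) < p := by exact_mod_cast hp.one_lt
    have h1 : (p : ℝ) ^ (-(3 / 4) : ℝ) < 1 :=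
      Real.rpow_lt_one_of_one_lt_of_neg hp1 (by norm_num)
    have h2 : 0 < (p : ℝ) ^ (-(3 / 4) : ℝ) := by positivity
    exact (one_le_inv₀ (by linarith)).2 (by linarith)
  have hP1 : 1 ≤ P := by
    exact Finset.one_le_prod fun p hp => hfac p (mem_filter.1 hp).2
  refine ⟨C * (2 * W ^ (1 / 4 : ℝ) * P), by positivity, ?_⟩
  intro q u x J hq hu Y N hY hYJ hN hNY S hS hSN hSg
  have hY0 : 0 < Y := by linarith
  have hW0 : 0 < W := by linarith
  have hJ0 : (0 : ℝ) < J := by linarith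
  set G := (range (⌊Y⌋₊ + 1)).filter fun g : ℕ =>
    0 < g ∧ (g : ℝ) ≤ Y ∧ Y ≤ g * W ∧ IsSmooth W g ∧ g.Coprime q with hG
  have h1 : (S.card : ℝ) ≤ ∑ g ∈ G, (2 * J * (g : ℝ) ^ (-1 : ℝ)) := by
    calc (S.card : ℝ) ≤ ((G.biUnion fun g => (apSet q u x J).filter fun m => g ∣ m).card : ℝ) := by
          gcongr
          intro m hm
          obtain ⟨g, hgm, hgY, hgW, hgs⟩ := hSg m hm
          have hmpos := pos_of_mem_apSet (hS hm)
          simp only [mem_biUnion, hG, mem_filter, mem_range]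
          exact ⟨g, ⟨Nat.lt_succ_of_le (Nat.le_floor hgY), Nat.pos_of_dvd_of_pos hgm hmpos, hgY,
            hgW, hgs, (coprime_of_mem_apSet hu (hS hm)).coprime_dvd_left hgm⟩, hS hm, hgm⟩
      _ ≤ ∑ g ∈ G, (((apSet q u x J).filter fun m => g ∣ m).card : ℝ) := by
          exact_mod_cast card_biUnion_le
      _ ≤ _ := by
          apply sum_le_sum
          intro g hg
          simp only [hG, mem_filter] at hg
          have hg0 : (0 : ℝ) < g := by exact_mod_cast hg.2.1
          have h2 := (abs_le.1 (abs_card_dvd_apSet_sub_le x J hq hg.2.1 hg.2.2.2.2.2 (u := u))).2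
          have h3 : 1 ≤ (J : ℝ) / g := by
            rw [one_le_div hg0]
            exact hg.2.2.1.trans hYJ
          rw [Real.rpow_neg_one, mul_assoc, ← div_eq_mul_inv]
          linarith
  have h4 : ∑ g ∈ G, (g : ℝ) ^ (-1 : ℝ) ≤ (Y / W) ^ (-(1 / 4) : ℝ) * P := by
    have h5 := sum_factored_rpow_le q W (β := -(3 / 4)) (by norm_num) G (by
      intro g hg
      simp only [hG, mem_filter] at hg
      exact ⟨hg.2.1.ne', fun p hp hpg => hg.2.2.2.2.1.mem_sievePrimes hW0.le hg.2.2.2.2.2 hp hpg⟩)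
    calc ∑ g ∈ G, (g : ℝ) ^ (-1 : ℝ)
        ≤ ∑ g ∈ G, (Y / W) ^ (-(1 / 4) : ℝ) * (g : ℝ) ^ (-(3 / 4) : ℝ) := by
          apply sum_le_sum
          intro g hg
          simp only [hG, mem_filter] at hg
          have hg0 : (0 : ℝ) < g := by exact_mod_cast hg.2.1
          have : (g : ℝ) ^ (-1 : ℝ) = (g : ℝ) ^ (-(1 / 4) : ℝ) * (g : ℝ) ^ (-(3 / 4) : ℝ) := by
            rw [← Real.rpow_add hg0]
            norm_num
          rw [this]
          gcongr ?_ * _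
          apply Real.rpow_le_rpow_of_nonpos (by positivity) _ (by norm_num)
          rw [div_le_iff₀ hW0]
          exact hg.2.2.2.1
      _ = (Y / W) ^ (-(1 / 4) : ℝ) * ∑ g ∈ G, (g : ℝ) ^ (-(3 / 4) : ℝ) := by rw [mul_sum]
      _ ≤ (Y / W) ^ (-(1 / 4) : ℝ) * P := by
          gcongr
          refine h5.trans ?_
          refine prod_le_prod_of_subset_of_one_le ?_ ?_ ?_
          · intro p hp
            simp only [sievePrimes, mem_filter] at hp ⊢
            exact ⟨hp.1, hp.2.1⟩
          · exact fun p hp => zero_le_one.trans (hfac p (prime_of_mem_sievePrimes hp))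
          · exact fun p hp _ => hfac p (mem_filter.1 hp).2
  calc ∑ m ∈ S, (m.divisors.card : ℝ) ≤ ∑ m ∈ S, C * Y ^ (1 / 4 : ℝ) := by
        apply sum_le_sum
        intro m hm
        refine (hdiv m (pos_of_mem_apSet (hS hm)).ne').trans ?_
        gcongr
        refine le_trans ?_ hNY
        have := hSN m hm
        gcongr
    _ = S.card * (C * Y ^ (1 / 4 : ℝ)) := by rw [sum_const, nsmul_eq_mul]
    _ ≤ (∑ g ∈ G, (2 * J * (g : ℝ) ^ (-1 : ℝ))) * (C * Y ^ (1 / 4 : ℝ)) := by gcongr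
    _ ≤ (2 * J * ((Y / W) ^ (-(1 / 4) : ℝ) * P)) * (C * Y ^ (1 / 4 : ℝ)) := by
        rw [← mul_sum]
        gcongr
    _ = C * (2 * W ^ (1 / 4 : ℝ) * P) * J := by
        rw [Real.div_rpow hY0.le hW0.le, Real.rpow_neg hY0.le, Real.rpow_neg hW0.le]
        field_simp

theorem sum_biUnion_le_sum_sum {ι κ : Type*} [DecidableEq ι] [DecidableEq κ] (I : Finset ι)
    (S : ι → Finset κ) {f : κ → ℝ} (hf : ∀ i, 0 ≤ f i) :
    ∑ m ∈ I.biUnion S, f m ≤ ∑ r ∈ I, ∑ m ∈ S r, f m := by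
  induction I using Finset.induction_on with
  | empty => simp
  | insert r I hr ih =>
    rw [biUnion_insert, sum_insert hr]
    have h := sum_union_inter (s₁ := S r) (s₂ := I.biUnion S) (f := f)
    have h' : 0 ≤ ∑ m ∈ S r ∩ I.biUnion S, f m := sum_nonneg fun m _ => hf m
    linarith

theorem sum_card_divisors_apSet_le : ∃ C : ℝ, 0 < C ∧ ∀ q u x J : ℕ, 0 < q → u.Coprime q →
    2 ≤ J → x + q * J ≤ J ^ 32 →
    ∑ m ∈ apSet q u x J, (m.divisors.card : ℝ) ≤ C * J * Real.log J := by
  classical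
  obtain ⟨C₁, hC₁, hclass⟩ := sum_card_divisors_class_le 2561
  set W₀ : ℝ := Real.exp (4 * 2561) with hW₀
  obtain ⟨C₂, hC₂, hsmooth⟩ := sum_card_divisors_smooth_class_le W₀
    (Real.one_le_exp (by norm_num)) (ε := 1 / 2560) (by norm_num)
  refine ⟨3 * C₁ * (Real.exp 2560 + 2) + 2 * C₂, by positivity, ?_⟩
  intro q u x J hq hu hJ2 hxJ
  have hJpos : (0 : ℝ) < J := by positivity
  set Λ : ℝ := Real.log J / 20 with hΛ
  have hlogJ : 1 / 2 ≤ Real.log J := by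
    have h1 : Real.log 2 ≤ Real.log J := Real.log_le_log (by norm_num) (by exact_mod_cast hJ2)
    have h2 := Real.log_two_gt_d9
    linarith
  have hΛ0 : 0 < Λ := by positivity
  have hJexp : (J : ℝ) = Real.exp (20 * Λ) := by
    rw [hΛ, mul_div_cancel₀ _ (by norm_num), Real.exp_log hJpos]
  set Y : ℝ := Real.exp Λ with hY
  have hY1 : 1 < Y := Real.one_lt_exp_iff.2 hΛ0
  have hlogY : Real.log Y = Λ := Real.log_exp Λ
  have hY7 : Y ^ 7 ≤ J := by
    rw [hJexp, hY, ← Real.exp_nat_mul]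
    apply Real.exp_le_exp.2
    norm_num
    linarith
  have hYJ : Y ≤ J := by
    rw [hJexp, hY]
    apply Real.exp_le_exp.2
    linarith
  set ℓ : ℕ → ℝ := fun r => Λ / (4 * 2 ^ r) with hℓ
  have hℓ0 : ∀ r, 0 < ℓ r := fun r => by positivity
  have hℓs : ∀ r, ℓ r = 2 * ℓ (r + 1) := fun r => by
    simp only [hℓ, pow_succ]
    field_simp
  have hℓ4 : ∀ r, ℓ r ≤ Λ / 4 := fun r => by
    apply div_le_div_of_nonneg_left hΛ0.le (by norm_num)
    have : (1 : ℝ) ≤ 2 ^ r := one_le_pow₀ (by norm_num)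
    linarith
  set W : ℕ → ℝ := fun r => Real.exp (ℓ r) with hW
  have hW1 : ∀ r, 1 < W r := fun r => Real.one_lt_exp_iff.2 (hℓ0 r)
  have hWY : ∀ r, W r ^ 4 ≤ Y := fun r => by
    rw [hW, ← Real.exp_nat_mul]
    apply Real.exp_le_exp.2
    have := hℓ4 r
    norm_num
    linarith
  have hWs : ∀ r, W r = W (r + 1) ^ 2 := fun r => by
    simp only [hW]
    rw [← Real.exp_nat_mul, hℓs r]
    norm_num
  have hWanti : Antitone W := antitone_nat_of_succ_le fun r => by
    apply Real.exp_le_exp.2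
    have := hℓs r
    have := hℓ0 (r + 1)
    linarith
  have hWsmall : ∀ r, ⌈Λ⌉₊ ≤ r → ℓ r ≤ 1 / 4 := fun r hr => by
    have h1 : Λ ≤ r := (Nat.le_ceil Λ).trans (by exact_mod_cast hr)
    have h2 : (r : ℝ) ≤ 2 ^ r := by exact_mod_cast (Nat.lt_two_pow_self).le
    simp only [hℓ]
    rw [div_le_div_iff₀ (by positivity) (by norm_num)]
    linarith
  have hW2 : ∃ r, W r < 2 := by
    refine ⟨⌈Λ⌉₊, ?_⟩
    rw [hW, ← Real.lt_log_iff_exp_lt (by norm_num)]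
    have := hWsmall _ le_rfl
    have := Real.log_two_gt_d9
    linarith
  set A := apSet q u x J with hA
  have hmlog : ∀ m ∈ A, ∀ g, g ∣ m → Real.log ((m / g : ℕ) : ℝ) ≤ 640 * Λ := by
    intro m hm g hgm
    have hmpos := pos_of_mem_apSet hm
    have h1 : m ≤ J ^ 32 := by
      simp only [hA, apSet, mem_filter, mem_Ioc] at hm
      omega
    have h2 : 0 < m / g := Nat.div_pos (Nat.le_of_dvd hmpos hgm) (Nat.pos_of_dvd_of_pos hgm hmpos)
    have h3 : ((m / g : ℕ) : ℝ) ≤ (J : ℝ) ^ 32 := by exact_mod_cast (Nat.div_le_self m g).trans h1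
    have h4 := Real.log_le_log (by exact_mod_cast h2) h3
    rw [Real.log_pow] at h4
    rw [hΛ]
    norm_num at h4 ⊢
    linarith
  have hne : ∀ m ∈ A, ∀ g, g ∣ m → m / g ≠ 0 := fun m hm g hgm =>
    (Nat.div_pos (Nat.le_of_dvd (pos_of_mem_apSet hm) hgm)
      (Nat.pos_of_dvd_of_pos hgm (pos_of_mem_apSet hm))).ne'
  set S₀ := A.filter fun m => ∃ g : ℕ, g ∣ m ∧ (g : ℝ) ≤ Y ∧ IsSmooth (W 0) g ∧ IsRough (W 0) (m / g)
    with hS₀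
  set S : ℕ → Finset ℕ := fun r => A.filter fun m => ∃ g : ℕ, g ∣ m ∧ (g : ℝ) ≤ Y ∧ Y < g * W r ∧
    IsSmooth (W r) g ∧ IsRough (W (r + 1)) (m / g) with hS
  set T := A.filter fun m => ∃ g : ℕ, g ∣ m ∧ (g : ℝ) ≤ Y ∧ Y ≤ g * W₀ ∧ IsSmooth W₀ g with hT
  set I := (range ⌈Λ⌉₊).filter fun r => W₀ ≤ W r with hI
  have hcover : A ⊆ S₀ ∪ (I.biUnion S ∪ T) := by
    intro m hm
    simp only [mem_union, mem_biUnion]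
    rcases exists_smooth_dvd_cases hWanti hW2 hY1.le (pos_of_mem_apSet hm).ne' with h |
      ⟨r, g, hgm, hgY, hgW, hgs, hgr⟩
    · exact Or.inl (mem_filter.2 ⟨hm, h⟩)
    · right
      by_cases hr : W₀ ≤ W r
      · refine Or.inl ⟨r, ?_, mem_filter.2 ⟨hm, g, hgm, hgY, hgW, hgs, hgr⟩⟩
        rw [hI, mem_filter, mem_range]
        refine ⟨?_, hr⟩
        by_contra! hcon
        have h1 := hWsmall r hcon
        have h2 : (4 * 2561 : ℝ) ≤ ℓ r := Real.exp_le_exp.1 hr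
        linarith
      · push Not at hr
        refine Or.inr (mem_filter.2 ⟨hm, g, hgm, hgY, ?_, fun p hp hpg => (hgs p hp hpg).trans hr.le⟩)
        exact hgW.le.trans (by gcongr)
  have hsum0 : ∑ m ∈ S₀, (m.divisors.card : ℝ) ≤ C₁ * J * Real.exp 2560 * (1 + Λ) := by
    have h := hclass q u x J hq hu (W 0) (W 0) Y (Real.exp 2560) (hW1 0) le_rfl
      (by nlinarith [hW1 0]) hY1 (hWY 0) hY7 (by positivity) 0 le_rfl (by norm_num)
      (by norm_num) 1 one_pos S₀ (filter_subset _ _) (by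
        intro m hm
        rw [hS₀, mem_filter] at hm
        obtain ⟨hm, g, hgm, hgY, hgs, hgr⟩ := hm
        refine ⟨g, hgm, hgY, ?_, hgs, hgr, ?_⟩
        · exact_mod_cast Nat.pos_of_dvd_of_pos hgm (pos_of_mem_apSet hm)
        · refine hgr.card_divisors_le_exp (hW1 0) (hne m hm g hgm) (hmlog m hm g hgm) ?_
            (by norm_num)
          rw [hW, Real.log_exp]
          simp only [hℓ]
          norm_num
          linarith)
    rw [hlogY] at h
    simpa using h
  have hsumr : ∀ r ∈ I, ∑ m ∈ S r, (m.divisors.card : ℝ) ≤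
      C₁ * J * (1 / 2 : ℝ) ^ r * (1 + Λ) := by
    intro r hr
    rw [hI, mem_filter] at hr
    have hr' : (4 * 2561 : ℝ) ≤ ℓ r := Real.exp_le_exp.1 hr.2
    have hlr := hℓ0 r
    have h := hclass q u x J hq hu (W r) (W (r + 1)) Y (Real.exp (5120 * 2 ^ r)) (hW1 _)
      (hWanti (Nat.le_succ r)) (hWs r).le hY1 (hWY r) hY7 (by positivity) (2561 / ℓ r)
      (by positivity) (by rw [div_le_div_iff₀ hlr (by norm_num)]; linarith)
      (by rw [hW, Real.log_exp, div_mul_cancel₀ _ hlr.ne']) (Real.exp (Λ / 2)) (by positivity)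
      (S r) (filter_subset _ _) (by
        intro m hm
        simp only [hS, mem_filter] at hm
        obtain ⟨hm, g, hgm, hgY, hgW, hgs, hgr⟩ := hm
        refine ⟨g, hgm, hgY, ?_, hgs, hgr, ?_⟩
        · have h1 : Real.exp (Λ / 2) * W r ≤ Y := by
            rw [hW, ← Real.exp_add]
            apply Real.exp_le_exp.2
            have := hℓ4 r
            linarith
          exact (lt_of_mul_lt_mul_right (h1.trans_lt hgW) (by linarith [hW1 r])).le
        · refine hgr.card_divisors_le_exp (hW1 _) (hne m hm g hgm) (hmlog m hm g hgm) ?_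
            (by positivity)
          rw [hW, Real.log_exp]
          simp only [hℓ, pow_succ]
          apply le_of_eq
          field_simp
          norm_num)
    rw [hlogY, ← Real.exp_mul] at h
    refine h.trans ?_
    rw [mul_assoc (C₁ * (J : ℝ)), ← Real.exp_add]
    have h2 : Real.exp (5120 * 2 ^ r + Λ / 2 * -(2561 / ℓ r)) ≤ (1 / 2 : ℝ) ^ r := by
      have h3 : (5120 * 2 ^ r + Λ / 2 * -(2561 / ℓ r)) = -(2 * 2 ^ r) := by
        simp only [hℓ]
        field_simp
        ring
      rw [h3, Real.exp_neg, one_div, inv_pow]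
      apply inv_anti₀ (by positivity)
      have := Real.add_one_le_exp (2 * (2 : ℝ) ^ r)
      have : (0 : ℝ) < 2 ^ r := by positivity
      linarith
    gcongr
  have hsumT : ∑ m ∈ T, (m.divisors.card : ℝ) ≤ C₂ * J := by
    refine hsmooth q u x J hq hu Y (Real.exp (640 * Λ)) hY1 hYJ (by positivity) ?_ T
      (filter_subset _ _) ?_ ?_
    · rw [hY, ← Real.exp_mul, ← Real.exp_mul]
      apply Real.exp_le_exp.2
      linarith
    · intro m hm
      have hm' := (mem_filter.1 hm).1
      have := hmlog m hm' 1 (one_dvd m)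
      rw [Nat.div_one] at this
      rwa [← Real.log_le_iff_le_exp (by exact_mod_cast pos_of_mem_apSet hm')]
    · intro m hm
      exact (mem_filter.1 hm).2
  have hgeom : ∑ r ∈ I, (1 / 2 : ℝ) ^ r ≤ 2 := by
    refine (sum_le_sum_of_subset_of_nonneg (filter_subset _ _) fun _ _ _ => by positivity).trans ?_
    exact sum_geometric_two_le _
  have h1Λ : 1 + Λ ≤ 3 * Real.log J := by
    rw [hΛ]
    linarith
  have hnn : ∀ m : ℕ, (0 : ℝ) ≤ m.divisors.card := fun m => Nat.cast_nonneg _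
  calc ∑ m ∈ A, (m.divisors.card : ℝ)
      ≤ ∑ m ∈ S₀ ∪ (I.biUnion S ∪ T), (m.divisors.card : ℝ) :=
        sum_le_sum_of_subset_of_nonneg hcover fun m _ _ => hnn m
    _ ≤ ∑ m ∈ S₀, (m.divisors.card : ℝ) + (∑ r ∈ I, ∑ m ∈ S r, (m.divisors.card : ℝ) +
          ∑ m ∈ T, (m.divisors.card : ℝ)) := by
        have h1 : ∀ X Z : Finset ℕ, ∑ m ∈ X ∪ Z, (m.divisors.card : ℝ) ≤
            ∑ m ∈ X, (m.divisors.card : ℝ) + ∑ m ∈ Z, (m.divisors.card : ℝ) := fun X Z => by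
          rw [← sum_union_inter]
          exact le_add_of_nonneg_right (sum_nonneg fun m _ => hnn m)
        have h2 : ∑ m ∈ I.biUnion S, (m.divisors.card : ℝ) ≤
            ∑ r ∈ I, ∑ m ∈ S r, (m.divisors.card : ℝ) :=
          sum_biUnion_le_sum_sum I S hnn
        linarith [h1 S₀ (I.biUnion S ∪ T), h1 (I.biUnion S) T]
    _ ≤ C₁ * J * Real.exp 2560 * (1 + Λ) + (C₁ * J * 2 * (1 + Λ) + C₂ * J) := by
        gcongr
        refine (sum_le_sum hsumr).trans ?_
        rw [← sum_mul, ← mul_sum]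
        gcongr
    _ = (C₁ * J * (Real.exp 2560 + 2)) * (1 + Λ) + C₂ * J * 1 := by ring
    _ ≤ (C₁ * J * (Real.exp 2560 + 2)) * (3 * Real.log J) + C₂ * J * (2 * Real.log J) := by
        gcongr
        linarith
    _ = _ := by ring

theorem sum_card_divisors_apSet_gcd_le : ∃ C : ℝ, 0 < C ∧ ∀ q u x J : ℕ, 0 < q →
    2 ≤ J → x + q * J ≤ J ^ 32 →
    ∑ m ∈ apSet q u x J, (m.divisors.card : ℝ) ≤
      (u.gcd q).divisors.card * (C * J * Real.log J) := by
  obtain ⟨C, hC, hbound⟩ := sum_card_divisors_apSet_le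
  refine ⟨C, hC, ?_⟩
  intro q u x J hq hJ hxJ
  set h := u.gcd q with hh
  have hh0 : 0 < h := Nat.gcd_pos_of_pos_right u hq
  obtain ⟨q', hq'⟩ : h ∣ q := Nat.gcd_dvd_right u q
  obtain ⟨u', hu'⟩ : h ∣ u := Nat.gcd_dvd_left u q
  have hq'0 : 0 < q' := by
    rcases Nat.eq_zero_or_pos q' with h0 | h0
    · simp [h0] at hq'; omega
    · exact h0
  have hcop : u'.Coprime q' := by
    have h1 : h * u'.gcd q' = h * 1 := by
      rw [← Nat.gcd_mul_left, ← hq', ← hu', mul_one]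
    exact Nat.eq_of_mul_eq_mul_left hh0 h1
  have hdvd : ∀ m ∈ apSet q u x J, h ∣ m := by
    intro m hm
    have h1 := (mem_filter.1 hm).2
    exact (h1.dvd_iff (Dvd.intro q' hq'.symm)).2 (Dvd.intro u' hu'.symm)
  have hmap : ∀ m ∈ apSet q u x J, m / h ∈ apSet q' u' (x / h) J := by
    intro m hm
    obtain ⟨m', rfl⟩ := hdvd m hm
    rw [Nat.mul_div_cancel_left _ hh0]
    simp only [apSet, mem_filter, mem_Ioc] at hm ⊢
    obtain ⟨⟨hm1, hm2⟩, hm3⟩ := hm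
    refine ⟨⟨?_, ?_⟩, ?_⟩
    · rw [Nat.div_lt_iff_lt_mul hh0, mul_comm]
      exact hm1
    · rw [← Nat.add_mul_div_left _ _ hh0, Nat.le_div_iff_mul_le hh0, mul_comm m' h, ← mul_assoc,
        ← hq']
      exact hm2
    · rw [hq', hu'] at hm3
      exact Nat.ModEq.mul_left_cancel' hh0.ne' hm3
  have hle : x / h + q' * J ≤ J ^ 32 := by
    have h1 := Nat.div_le_self x h
    have h2 : q' ≤ q := Nat.le_of_dvd hq (Dvd.intro_left h hq'.symm)
    have h3 : q' * J ≤ q * J := Nat.mul_le_mul_right J h2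
    omega
  calc ∑ m ∈ apSet q u x J, (m.divisors.card : ℝ)
      ≤ ∑ m ∈ apSet q u x J, (h.divisors.card : ℝ) * (m / h).divisors.card :=
        sum_le_sum fun m hm => card_divisors_le_of_dvd (hdvd m hm)
    _ = h.divisors.card * ∑ m ∈ apSet q u x J, ((m / h).divisors.card : ℝ) := by rw [mul_sum]
    _ = h.divisors.card * ∑ m ∈ (apSet q u x J).image (· / h), (m.divisors.card : ℝ) := by
        rw [sum_image]
        intro m hm n hn hmn
        rw [← Nat.div_mul_cancel (hdvd m hm), ← Nat.div_mul_cancel (hdvd n hn)]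
        exact congrArg (· * h) hmn
    _ ≤ h.divisors.card * ∑ m ∈ apSet q' u' (x / h) J, (m.divisors.card : ℝ) := by
        refine mul_le_mul_of_nonneg_left ?_ (Nat.cast_nonneg _)
        exact sum_le_sum_of_subset_of_nonneg (image_subset_iff.2 hmap) fun _ _ _ =>
          Nat.cast_nonneg _
    _ ≤ h.divisors.card * (C * J * Real.log J) := by
        exact mul_le_mul_of_nonneg_left (hbound q' u' (x / h) J hq'0 hcop hJ hle)
          (Nat.cast_nonneg _)

theorem one_le_log_of_four_le {X : ℝ} (hX : 4 ≤ X) : 1 ≤ Real.log X := by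
  have h1 : Real.log 4 ≤ Real.log X := Real.log_le_log (by norm_num) hX
  have h2 : Real.log 4 = 2 * Real.log 2 := by
    rw [show (4 : ℝ) = 2 ^ 2 by norm_num, Real.log_pow]
    norm_num
  have := Real.log_two_gt_d9
  linarith

theorem sum_card_divisors_apSet_ceil_le : ∃ C : ℝ, 0 < C ∧ ∀ (q u x : ℕ) (X T : ℝ), 0 < q →
    4 ≤ X → X ^ (1 / 8 : ℝ) ≤ T → T ≤ 8 * X → ((x + q * ⌈T⌉₊ : ℕ) : ℝ) ≤ X ^ 4 →
    ∑ m ∈ apSet q u x ⌈T⌉₊, (m.divisors.card : ℝ) ≤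
      C * (u.gcd q).divisors.card * T * Real.log X := by
  obtain ⟨C, hC, hbound⟩ := sum_card_divisors_apSet_gcd_le
  refine ⟨6 * C, by positivity, ?_⟩
  intro q u x X T hq hX hXT hTX hxT
  have hX0 : 0 ≤ X := by linarith
  have hT1 : 1 < T := (Real.one_lt_rpow (by linarith) (by norm_num)).trans_le hXT
  have hTJ := Nat.le_ceil T
  have hJT : (⌈T⌉₊ : ℝ) ≤ 2 * T := by
    have := Nat.ceil_lt_add_one (show 0 ≤ T by linarith)
    linarith
  have hJ2 : 2 ≤ ⌈T⌉₊ := by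
    have : 1 < ⌈T⌉₊ := Nat.lt_ceil.2 (by exact_mod_cast hT1)
    omega
  have hpow : X ^ 4 ≤ (⌈T⌉₊ : ℝ) ^ 32 := by
    have h1 : (X ^ (1 / 8 : ℝ)) ^ 32 = X ^ 4 := by
      rw [← Real.rpow_natCast, ← Real.rpow_mul hX0, ← Real.rpow_natCast]
      norm_num
    rw [← h1]
    gcongr
    exact hXT.trans hTJ
  have h := hbound q u x ⌈T⌉₊ hq hJ2 (by exact_mod_cast hxT.trans hpow)
  have hlog : Real.log ⌈T⌉₊ ≤ 3 * Real.log X := by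
    rw [← Nat.cast_ofNat (R := ℝ), ← Real.log_pow]
    apply Real.log_le_log (by linarith)
    nlinarith [mul_le_mul hX hX (by norm_num) hX0]
  refine h.trans ?_
  have hlogX := one_le_log_of_four_le hX
  calc ((u.gcd q).divisors.card : ℝ) * (C * ⌈T⌉₊ * Real.log ⌈T⌉₊)
      ≤ (u.gcd q).divisors.card * (C * (2 * T) * (3 * Real.log X)) := by gcongr
    _ = _ := by ring

theorem card_le_sum_card_divisors_of_mul_mem (S : Finset (ℕ × ℕ)) (A : Finset ℕ) (hA : 0 ∉ A)
    (h : ∀ p ∈ S, p.1 * p.2 ∈ A) : (S.card : ℝ) ≤ ∑ m ∈ A, (m.divisors.card : ℝ) := by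
  have h1 : S ⊆ A.biUnion Nat.divisorsAntidiagonal := by
    intro p hp
    rw [mem_biUnion]
    refine ⟨p.1 * p.2, h p hp, Nat.mem_divisorsAntidiagonal.2 ⟨rfl, ?_⟩⟩
    exact fun h0 => hA (h0 ▸ h p hp)
  have h2 : S.card ≤ ∑ m ∈ A, m.divisors.card := by
    refine (card_le_card h1).trans (card_biUnion_le.trans (le_of_eq ?_))
    refine sum_congr rfl fun m _ => ?_
    rw [← Nat.map_div_right_divisors, card_map]
  exact_mod_cast h2

theorem sum_inv_Icc_le {N : ℕ} {L : ℝ} (hL : 1 + Real.log N ≤ L) :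
    ∑ l ∈ Icc 1 N, 1 / (l : ℝ) ≤ L := by
  have h2 := harmonic_le_one_add_log N
  rw [harmonic_eq_sum_Icc] at h2
  push_cast at h2
  simp only [one_div]
  exact h2.trans hL

theorem sum_inv_dvd_le {N h : ℕ} (hh : 0 < h) :
    ∑ l ∈ (Icc 1 N).filter (fun l => h ∣ l), 1 / (l : ℝ) ≤
      1 / h * ∑ l ∈ Icc 1 N, 1 / (l : ℝ) := by
  rw [mul_sum]
  have h1 : (Icc 1 N).filter (fun l => h ∣ l) ⊆ (Icc 1 N).image (h * ·) := by
    intro l hl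
    simp only [mem_filter, mem_Icc, mem_image] at hl ⊢
    obtain ⟨⟨hl1, hl2⟩, t, rfl⟩ := hl
    refine ⟨t, ⟨Nat.pos_of_mul_pos_left hl1, ?_⟩, rfl⟩
    exact (Nat.le_mul_of_pos_left t hh).trans hl2
  refine (sum_le_sum_of_subset_of_nonneg h1 fun _ _ _ => by positivity).trans (le_of_eq ?_)
  rw [sum_image (fun a _ b _ hab => Nat.eq_of_mul_eq_mul_left hh hab)]
  refine sum_congr rfl fun l _ => ?_
  push_cast
  rw [one_div_mul_one_div]

theorem sum_card_divisors_gcd_div_le (N : ℕ) :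
    ∑ p ∈ Icc 1 N ×ˢ Icc 1 N, ((p.1.gcd p.2).divisors.card : ℝ) * (1 / p.1 * (1 / p.2)) ≤
      2 * (∑ l ∈ Icc 1 N, 1 / (l : ℝ)) ^ 2 := by
  classical
  set H := ∑ l ∈ Icc 1 N, 1 / (l : ℝ) with hH
  have hH0 : 0 ≤ H := sum_nonneg fun _ _ => by positivity
  calc ∑ p ∈ Icc 1 N ×ˢ Icc 1 N, ((p.1.gcd p.2).divisors.card : ℝ) * (1 / p.1 * (1 / p.2))
      = ∑ p ∈ Icc 1 N ×ˢ Icc 1 N, ∑ h ∈ Icc 1 N,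
          (if h ∣ p.1 then (1 / p.1 : ℝ) else 0) * (if h ∣ p.2 then (1 / p.2 : ℝ) else 0) := by
        refine sum_congr rfl fun p hp => ?_
        simp only [mem_product, mem_Icc] at hp
        have h1 : (p.1.gcd p.2).divisors = (Icc 1 N).filter fun h => h ∣ p.1 ∧ h ∣ p.2 := by
          ext h
          simp only [Nat.mem_divisors, mem_filter, mem_Icc, Nat.dvd_gcd_iff]
          constructor
          · rintro ⟨⟨h1, h2⟩, -⟩
            exact ⟨⟨Nat.pos_of_dvd_of_pos h1 (by omega),
              (Nat.le_of_dvd (by omega) h1).trans (by omega)⟩, h1, h2⟩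
          · rintro ⟨-, h1, h2⟩
            exact ⟨⟨h1, h2⟩, (Nat.gcd_pos_of_pos_left _ (by omega)).ne'⟩
        rw [h1, ← nsmul_eq_mul, ← sum_const, sum_filter]
        refine sum_congr rfl fun h _ => ?_
        by_cases h2 : h ∣ p.1 <;> by_cases h3 : h ∣ p.2 <;> simp [h2, h3]
    _ = ∑ h ∈ Icc 1 N, (∑ l ∈ (Icc 1 N).filter (fun l => h ∣ l), 1 / (l : ℝ)) ^ 2 := by
        rw [sum_comm]
        refine sum_congr rfl fun h _ => ?_
        rw [sq, sum_filter, sum_mul_sum, sum_product]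
    _ ≤ ∑ h ∈ Icc 1 N, (1 / h * H) ^ 2 := by
        refine sum_le_sum fun h hh => ?_
        gcongr
        exact sum_inv_dvd_le (mem_Icc.1 hh).1
    _ = (∑ h ∈ Ioo 0 (N + 1), ((h : ℝ) ^ 2)⁻¹) * H ^ 2 := by
        rw [sum_mul, show Icc 1 N = Ioo 0 (N + 1) by ext; simp only [mem_Icc, mem_Ioo]; omega]
        refine sum_congr rfl fun h _ => ?_
        rw [mul_pow, one_div, inv_pow]
    _ ≤ 2 * H ^ 2 := by
        gcongr
        have := sum_Ioo_inv_sq_le (α := ℝ) 0 (N + 1)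
        norm_num at this ⊢
        exact this

/-- The positive quadruples `(a, b, c, d)` with `bd < ac`, `abcd < 4 * X`, `(abcd, k) = 1` and
`ac ≡ ± bd` modulo `k`. -/
def IsCongruentQuad (k : ℕ) (X : ℝ) (p : ℕ × ℕ × ℕ × ℕ) : Prop :=
  (0 < p.1 ∧ 0 < p.2.1 ∧ 0 < p.2.2.1 ∧ 0 < p.2.2.2) ∧
  p.2.1 * p.2.2.2 < p.1 * p.2.2.1 ∧
  (((p.1 * p.2.2.1) * (p.2.1 * p.2.2.2) : ℕ) : ℝ) < 4 * X ∧
  ((p.1 * p.2.2.1) * (p.2.1 * p.2.2.2)).Coprime k ∧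
  ∃ l, p.1 * p.2.2.1 = p.2.1 * p.2.2.2 + k * l ∨ p.1 * p.2.2.1 + p.2.1 * p.2.2.2 = k * l

theorem zero_notMem_apSet (q u x J : ℕ) : 0 ∉ apSet q u x J := fun h =>
  (pos_of_mem_apSet h).ne' rfl

theorem card_congruentQuad_small_le : ∃ C : ℝ, 0 < C ∧ ∀ (k : ℕ) (X : ℝ), 0 < k → 4 ≤ X →
    (k : ℝ) ≤ X ^ (10 / 19 : ℝ) → ∀ S : Finset (ℕ × ℕ × ℕ × ℕ),
    (∀ p ∈ S, IsCongruentQuad k X p ∧ ((p.2.1 * p.2.2.2 : ℕ) : ℝ) ≤ X ^ (1 / 4 : ℝ)) →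
    (S.card : ℝ) ≤ C * (X / k) * Real.log X ^ 3 := by
  classical
  obtain ⟨C, hC, hbound⟩ := sum_card_divisors_apSet_ceil_le
  refine ⟨32 * C, by positivity, ?_⟩
  intro k X hk hX hkX S hS
  have hX0 : 0 < X := by linarith
  have hk0 : (0 : ℝ) < k := by exact_mod_cast hk
  have hlog := one_le_log_of_four_le hX
  set N := ⌊X⌋₊ with hN
  have hXX : X ^ (1 / 4 : ℝ) ≤ X := Real.rpow_le_self_of_one_le (by linarith) (by norm_num)
  have hmaps : (S : Set (ℕ × ℕ × ℕ × ℕ)).MapsTo (fun p => (p.2.1, p.2.2.2))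
      (Icc 1 N ×ˢ Icc 1 N : Finset (ℕ × ℕ)) := by
    intro p hp
    obtain ⟨⟨⟨h1, h2, h3, h4⟩, -⟩, h5⟩ := hS p hp
    have h6 : p.2.1 * p.2.2.2 ≤ N := Nat.le_floor (h5.trans hXX)
    simp only [coe_product, Set.mem_prod, mem_coe, mem_Icc]
    exact ⟨⟨h2, (Nat.le_mul_of_pos_right _ h4).trans h6⟩,
      h4, (Nat.le_mul_of_pos_left _ h2).trans h6⟩
  have hfiber : ∀ i ∈ Icc 1 N ×ˢ Icc 1 N,
      ((S.filter fun p => (p.2.1, p.2.2.2) = i).card : ℝ) ≤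
        8 * C * (X / k) * Real.log X * (1 / i.1 * (1 / i.2)) := by
    rintro ⟨b, d⟩ hbd
    simp only [mem_product, mem_Icc] at hbd
    set F := S.filter fun p => (p.2.1, p.2.2.2) = (b, d) with hF
    rcases F.eq_empty_or_nonempty with h0 | ⟨p₀, hp₀⟩
    · rw [h0, card_empty, Nat.cast_zero]
      positivity
    have hb0 : (0 : ℝ) < b := by exact_mod_cast hbd.1.1
    have hd0 : (0 : ℝ) < d := by exact_mod_cast hbd.2.1
    have hFS : ∀ p ∈ F, p.2.1 = b ∧ p.2.2.2 = d ∧ IsCongruentQuad k X p ∧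
        ((b * d : ℕ) : ℝ) ≤ X ^ (1 / 4 : ℝ) := by
      intro p hp
      obtain ⟨hp1, hp2⟩ := mem_filter.1 hp
      obtain ⟨h1, h2⟩ := Prod.mk.inj hp2
      have := hS p hp1
      rw [h1, h2] at this
      exact ⟨h1, h2, this⟩
    obtain ⟨h1, h2, ⟨-, -, -, hcop, -⟩, hn⟩ := hFS p₀ hp₀
    rw [h1, h2] at hcop
    have hnk : (b * d).Coprime k := Nat.Coprime.coprime_mul_left hcop
    push_cast at hn
    set T : ℝ := 4 * X / (b * d * k) with hT
    have hTlow : X ^ (1 / 8 : ℝ) ≤ T := by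
      rw [hT, le_div_iff₀ (by positivity)]
      calc X ^ (1 / 8 : ℝ) * (b * d * k)
          ≤ X ^ (1 / 8 : ℝ) * (X ^ (1 / 4 : ℝ) * X ^ (10 / 19 : ℝ)) := by gcongr
        _ = X ^ (1 / 8 + (1 / 4 + 10 / 19) : ℝ) := by
            rw [← Real.rpow_add hX0, ← Real.rpow_add hX0]
        _ ≤ X := Real.rpow_le_self_of_one_le (by linarith) (by norm_num)
        _ ≤ 4 * X := by linarith
    have hbdk : (1 : ℝ) ≤ b * d * k := by
      exact_mod_cast Nat.mul_pos (Nat.mul_pos hbd.1.1 hbd.2.1) hk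
    have hThigh : T ≤ 4 * X := div_le_self (by linarith) hbdk
    have hbd1 : (1 : ℝ) ≤ b * d := by exact_mod_cast Nat.mul_pos hbd.1.1 hbd.2.1
    have hkT : (k : ℝ) * T ≤ 4 * X := by
      have : (k : ℝ) * T = 4 * X / (b * d) := by
        rw [hT]
        field_simp
      rw [this]
      exact div_le_self (by linarith) hbd1
    have hT1 : 1 ≤ T := (Real.one_le_rpow (by linarith) (by norm_num)).trans hTlow
    have hceil : (⌈T⌉₊ : ℝ) ≤ 2 * T := by
      have := Nat.ceil_lt_add_one (show 0 ≤ T by linarith)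
      linarith
    have hX4 : 8 * X ≤ X ^ 4 := by nlinarith [pow_le_pow_left₀ (by norm_num) hX 3]
    have hlen : ((0 + k * ⌈T⌉₊ : ℕ) : ℝ) ≤ X ^ 4 := by
      push_cast
      nlinarith
    have hsum : ∀ u : ℕ, u.Coprime k →
        ∑ m ∈ apSet k u 0 ⌈T⌉₊, (m.divisors.card : ℝ) ≤ C * T * Real.log X := by
      intro u hu
      have h := hbound k u 0 X T hk hX hTlow (by linarith) hlen
      rw [Nat.coprime_iff_gcd_eq_one.1 hu] at h
      simpa using h
    have hcop2 : ((k - 1) * (b * d)).Coprime k := by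
      refine Nat.Coprime.mul_left ?_ hnk
      have := (Nat.coprime_self_add_right (m := k - 1) (n := 1)).2 (Nat.coprime_one_right _)
      rwa [Nat.sub_add_cancel hk] at this
    have hcard : F.card = (F.image fun p => (p.1, p.2.2.1)).card := by
      symm
      apply card_image_of_injOn
      intro p hp p' hp' hpp
      obtain ⟨h1, h2, -⟩ := hFS p hp
      obtain ⟨h1', h2', -⟩ := hFS p' hp'
      obtain ⟨h3, h4⟩ := Prod.mk.inj hpp
      ext
      · exact h3
      · rw [h1, h1']
      · exact h4
      · rw [h2, h2']
    have hcount := card_le_sum_card_divisors_of_mul_mem (F.image fun p => (p.1, p.2.2.1))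
      (apSet k (b * d) 0 ⌈T⌉₊ ∪ apSet k ((k - 1) * (b * d)) 0 ⌈T⌉₊) (by
        simp [zero_notMem_apSet]) (by
        intro r hr
        obtain ⟨p, hp, rfl⟩ := mem_image.1 hr
        obtain ⟨h1, h2, ⟨⟨ha, -, hc, -⟩, -, h4X, -, l, hl⟩, -⟩ := hFS p hp
        rw [h1, h2] at h4X hl
        dsimp only
        set m := p.1 * p.2.2.1
        have hm0 : 0 < m := Nat.mul_pos ha hc
        have hmJ : m ≤ 0 + k * ⌈T⌉₊ := by
          have h5 : (m : ℝ) ≤ k * T := by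
            rw [hT, mul_div_assoc', le_div_iff₀ (by positivity)]
            push_cast at h4X
            nlinarith
          have h6 : (m : ℝ) ≤ k * ⌈T⌉₊ := h5.trans (by gcongr; exact Nat.le_ceil T)
          rw [zero_add]
          exact_mod_cast h6
        simp only [apSet, mem_union, mem_filter, mem_Ioc]
        rcases hl with hl | hl
        · refine Or.inl ⟨⟨hm0, hmJ⟩, ?_⟩
          rw [hl]
          simp [Nat.ModEq]
        · refine Or.inr ⟨⟨hm0, hmJ⟩, ?_⟩
          apply Nat.ModEq.add_right_cancel' (b * d)
          rw [hl, ← Nat.succ_mul, Nat.succ_eq_add_one, Nat.sub_add_cancel hk]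
          simp [Nat.ModEq])
    rw [← hcard] at hcount
    have hunion : ∑ m ∈ apSet k (b * d) 0 ⌈T⌉₊ ∪ apSet k ((k - 1) * (b * d)) 0 ⌈T⌉₊,
        (m.divisors.card : ℝ) ≤ C * T * Real.log X + C * T * Real.log X := by
      refine le_trans ?_ (add_le_add (hsum _ hnk) (hsum _ hcop2))
      rw [← sum_union_inter]
      exact le_add_of_nonneg_right (sum_nonneg fun m _ => Nat.cast_nonneg _)
    refine hcount.trans (hunion.trans (le_of_eq ?_))
    dsimp only
    rw [hT]
    field_simp
    norm_num
  have hH : ∑ l ∈ Icc 1 N, 1 / (l : ℝ) ≤ 2 * Real.log X := by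
    apply sum_inv_Icc_le
    have h1 : Real.log N ≤ Real.log X :=
      Real.log_le_log (by exact_mod_cast Nat.floor_pos.2 (by linarith)) (Nat.floor_le hX0.le)
    linarith
  rw [card_eq_sum_card_fiberwise hmaps]
  push_cast
  calc ∑ i ∈ Icc 1 N ×ˢ Icc 1 N, ((S.filter fun p => (p.2.1, p.2.2.2) = i).card : ℝ)
      ≤ ∑ i ∈ Icc 1 N ×ˢ Icc 1 N, 8 * C * (X / k) * Real.log X * (1 / i.1 * (1 / i.2)) :=
        sum_le_sum hfiber
    _ = 8 * C * (X / k) * Real.log X * (∑ l ∈ Icc 1 N, 1 / (l : ℝ)) ^ 2 := by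
        rw [← mul_sum, sum_product, sq, sum_mul_sum]
    _ ≤ 8 * C * (X / k) * Real.log X * (2 * Real.log X) ^ 2 := by gcongr
    _ = _ := by ring

theorem IsCongruentQuad.mul_lt {k l a b c d : ℕ} {X : ℝ} (h : IsCongruentQuad k X (a, b, c, d))
    (hl : a * c = b * d + k * l ∨ a * c + b * d = k * l) :
    0 < l ∧ ((k * l * (b * d) : ℕ) : ℝ) < 8 * X := by
  obtain ⟨⟨ha, hb, hc, hd⟩, hlt, hX, -⟩ := h
  dsimp only at ha hb hc hd hlt hX
  have hac : 0 < a * c := Nat.mul_pos ha hc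
  constructor
  · rcases Nat.eq_zero_or_pos l with rfl | h
    · rw [mul_zero] at hl
      omega
    · exact h
  · have h1 : k * l ≤ 2 * (a * c) := by omega
    have h2 : k * l * (b * d) ≤ 2 * (a * c * (b * d)) := by
      rw [← mul_assoc 2]
      exact Nat.mul_le_mul_right _ h1
    have h3 : ((k * l * (b * d) : ℕ) : ℝ) ≤ 2 * ((a * c * (b * d) : ℕ) : ℝ) := by exact_mod_cast h2
    linarith

theorem card_congruentQuad_large_le : ∃ C : ℝ, 0 < C ∧ ∀ (k : ℕ) (X : ℝ), 0 < k → 4 ≤ X →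
    ∀ S : Finset (ℕ × ℕ × ℕ × ℕ),
    (∀ p ∈ S, IsCongruentQuad k X p ∧ p.2.1 ≤ p.2.2.2 ∧
      X ^ (1 / 4 : ℝ) < ((p.2.1 * p.2.2.2 : ℕ) : ℝ)) →
    (S.card : ℝ) ≤ C * (X / k) * Real.log X ^ 3 := by
  classical
  obtain ⟨C, hC, hbound⟩ := sum_card_divisors_apSet_ceil_le
  refine ⟨512 * C, by positivity, ?_⟩
  intro k X hk hX S hS
  have hX0 : 0 < X := by linarith
  have hk0 : (0 : ℝ) < k := by exact_mod_cast hk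
  have hlog := one_le_log_of_four_le hX
  set N := ⌊8 * X⌋₊ with hN
  have hd8 : ∀ b d : ℕ, b ≤ d → X ^ (1 / 4 : ℝ) < ((b * d : ℕ) : ℝ) → X ^ (1 / 8 : ℝ) < d := by
    intro b d hbd h
    by_contra! hcon
    have h1 : X ^ (1 / 4 : ℝ) = X ^ (1 / 8 : ℝ) * X ^ (1 / 8 : ℝ) := by
      rw [← Real.rpow_add hX0]
      norm_num
    have h2 : (b : ℝ) ≤ d := by exact_mod_cast hbd
    push_cast at h
    have h3 : (b : ℝ) * d ≤ X ^ (1 / 8 : ℝ) * X ^ (1 / 8 : ℝ) := by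
      have := h2.trans hcon
      gcongr
    linarith
  set F : ℕ × ℕ → Finset (ℕ × ℕ × ℕ × ℕ) := fun i => S.filter fun p => p.2.1 = i.2 ∧
    (p.1 * p.2.2.1 = p.2.1 * p.2.2.2 + k * i.1 ∨
      p.1 * p.2.2.1 + p.2.1 * p.2.2.2 = k * i.1) with hF
  have hcover : S ⊆ (Icc 1 N ×ˢ Icc 1 N).biUnion F := by
    rintro ⟨a, b, c, d⟩ hp
    obtain ⟨hq, hbd, h14⟩ := hS _ hp
    obtain ⟨⟨ha, hb, hc, hd⟩, -, -, -, l, hl⟩ := id hq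
    obtain ⟨hl0, h8⟩ := hq.mul_lt hl
    dsimp only at ha hb hc hd hl h8
    have h1 : k * l * (b * d) ≤ N := Nat.le_floor h8.le
    have hkl : 0 < k * l := Nat.mul_pos hk hl0
    have h2 : l ≤ k * l * (b * d) :=
      (Nat.le_mul_of_pos_left l hk).trans (Nat.le_mul_of_pos_right _ (Nat.mul_pos hb hd))
    have h3 : b ≤ k * l * (b * d) :=
      (Nat.le_mul_of_pos_right b hd).trans (Nat.le_mul_of_pos_left _ hkl)
    rw [mem_biUnion]
    refine ⟨(l, b), ?_, mem_filter.2 ⟨hp, rfl, hl⟩⟩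
    simp only [mem_product, mem_Icc]
    omega
  have hfiber : ∀ i ∈ Icc 1 N ×ˢ Icc 1 N, ((F i).card : ℝ) ≤
      16 * C * (X / k) * Real.log X *
        (((i.1.gcd i.2).divisors.card : ℝ) * (1 / i.1 * (1 / i.2))) := by
    rintro ⟨l, b⟩ hlb
    simp only [mem_product, mem_Icc] at hlb
    have hFS : ∀ p ∈ F (l, b), p.2.1 = b ∧ IsCongruentQuad k X p ∧
        X ^ (1 / 8 : ℝ) < p.2.2.2 ∧ ((k * l * (b * p.2.2.2) : ℕ) : ℝ) < 8 * X ∧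
        (p.1 * p.2.2.1 = b * p.2.2.2 + k * l ∨ p.1 * p.2.2.1 + b * p.2.2.2 = k * l) := by
      rintro ⟨a, b', c, d⟩ hp
      obtain ⟨hpS, hpb, hpl⟩ := mem_filter.1 hp
      dsimp only at hpb hpl
      subst hpb
      obtain ⟨hq, hbd, h14⟩ := hS _ hpS
      exact ⟨rfl, hq, hd8 _ _ hbd h14, (hq.mul_lt hpl).2, hpl⟩
    rcases (F (l, b)).eq_empty_or_nonempty with h0 | ⟨p₀, hp₀⟩
    · rw [h0, card_empty, Nat.cast_zero]
      have : (0 : ℝ) ≤ ((l.gcd b).divisors.card : ℝ) := Nat.cast_nonneg _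
      dsimp only
      positivity
    have hl0 : (0 : ℝ) < l := by exact_mod_cast hlb.1.1
    have hb0 : (0 : ℝ) < b := by exact_mod_cast hlb.2.1
    set T : ℝ := 8 * X / (k * l * b) with hT
    have hdT : ∀ d : ℕ, ((k * l * (b * d) : ℕ) : ℝ) < 8 * X → (d : ℝ) < T := by
      intro d hd
      rw [hT, lt_div_iff₀ (by positivity)]
      push_cast at hd
      linarith
    obtain ⟨hpb, ⟨-, -, -, hcop, -⟩, hd₀, hd₀', -⟩ := hFS p₀ hp₀
    have hTlow : X ^ (1 / 8 : ℝ) ≤ T := (hd₀.trans (hdT _ hd₀')).le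
    have hbk : k.Coprime b := by
      rw [hpb] at hcop
      exact (hcop.coprime_mul_left.coprime_mul_right).symm
    have hgcd : (k * l).gcd b = l.gcd b := hbk.gcd_mul_left_cancel l
    have hklb : (1 : ℝ) ≤ k * l * b := by
      exact_mod_cast Nat.mul_pos (Nat.mul_pos hk hlb.1.1) hlb.2.1
    have hThigh : T ≤ 8 * X := div_le_self (by linarith) hklb
    have hT1 : 1 ≤ T := (Real.one_le_rpow (by linarith) (by norm_num)).trans hTlow
    have hceil : (⌈T⌉₊ : ℝ) ≤ 2 * T := by
      have := Nat.ceil_lt_add_one (show 0 ≤ T by linarith)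
      linarith
    have hX4 : 64 * X ≤ X ^ 4 := by nlinarith [pow_le_pow_left₀ (by norm_num) hX 3]
    have hbT : (b : ℝ) * T ≤ 8 * X := by
      have h1 : (b : ℝ) * T = 8 * X / (k * l) := by
        rw [hT]
        field_simp
      rw [h1]
      apply div_le_self (by linarith)
      exact_mod_cast Nat.mul_pos hk hlb.1.1
    have hklX : (k : ℝ) * l ≤ 8 * X := by
      have h1 : k * l ≤ k * l * (b * p₀.2.2.2) := by
        apply Nat.le_mul_of_pos_right
        apply Nat.mul_pos hlb.2.1
        have : (0 : ℝ) < (p₀.2.2.2 : ℝ) := lt_of_le_of_lt (by positivity) hd₀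
        exact_mod_cast this
      have h2 : ((k * l : ℕ) : ℝ) ≤ ((k * l * (b * p₀.2.2.2) : ℕ) : ℝ) := by exact_mod_cast h1
      push_cast at h2 hd₀'
      linarith
    have hsum : ∀ x : ℕ, x ≤ k * l → ∑ m ∈ apSet b (k * l) x ⌈T⌉₊, (m.divisors.card : ℝ) ≤
        C * (l.gcd b).divisors.card * T * Real.log X := by
      intro x hx
      rw [← hgcd]
      refine hbound b (k * l) x X T hlb.2.1 hX hTlow hThigh ?_
      have hx' : (x : ℝ) ≤ k * l := by exact_mod_cast hx
      push_cast
      nlinarith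
    have hdJ : ∀ p ∈ F (l, b), b * p.2.2.2 < b * ⌈T⌉₊ := by
      intro p hp
      apply Nat.mul_lt_mul_of_pos_left _ hlb.2.1
      exact Nat.lt_ceil.2 (hdT _ (hFS p hp).2.2.2.1)
    have hinj : ∀ P ⊆ F (l, b), (∀ p ∈ P, ∀ p' ∈ P, p.1 * p.2.2.1 = p'.1 * p'.2.2.1 →
        b * p.2.2.2 = b * p'.2.2.2) → (P.image fun p => (p.1, p.2.2.1)).card = P.card := by
      intro P hPF hP
      apply card_image_of_injOn
      intro p hp p' hp' hpp
      obtain ⟨h3, h4⟩ := Prod.mk.inj hpp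
      ext
      · exact h3
      · rw [(hFS p (hPF hp)).1, (hFS p' (hPF hp')).1]
      · exact h4
      · exact Nat.eq_of_mul_eq_mul_left hlb.2.1 (hP p hp p' hp' (by rw [h3, h4]))
    have hplus : (((F (l, b)).filter fun p => p.1 * p.2.2.1 = b * p.2.2.2 + k * l).card : ℝ) ≤
        C * (l.gcd b).divisors.card * T * Real.log X := by
      set P := (F (l, b)).filter fun p => p.1 * p.2.2.1 = b * p.2.2.2 + k * l with hP
      rw [← hinj P (filter_subset _ _) fun p hp p' hp' h => by
        have hpe := (mem_filter.1 hp).2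
        have hpe' := (mem_filter.1 hp').2
        omega]
      refine (card_le_sum_card_divisors_of_mul_mem _ (apSet b (k * l) (k * l) ⌈T⌉₊)
        (zero_notMem_apSet _ _ _ _) ?_).trans (hsum _ le_rfl)
      intro r hr
      obtain ⟨p, hp, rfl⟩ := mem_image.1 hr
      obtain ⟨hp, hpe⟩ := mem_filter.1 hp
      obtain ⟨-, ⟨⟨-, -, -, hd⟩, -⟩, -⟩ := hFS p hp
      have h1 := hdJ p hp
      have h2 := Nat.mul_pos hlb.2.1 hd
      simp only [apSet, mem_filter, mem_Ioc]
      rw [hpe]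
      refine ⟨⟨by omega, by omega⟩, ?_⟩
      simp [Nat.ModEq]
    have hminus : (((F (l, b)).filter fun p => p.1 * p.2.2.1 + b * p.2.2.2 = k * l).card : ℝ) ≤
        C * (l.gcd b).divisors.card * T * Real.log X := by
      set P := (F (l, b)).filter fun p => p.1 * p.2.2.1 + b * p.2.2.2 = k * l with hP
      rw [← hinj P (filter_subset _ _) fun p hp p' hp' h => by
        have hpe := (mem_filter.1 hp).2
        have hpe' := (mem_filter.1 hp').2
        omega]
      refine (card_le_sum_card_divisors_of_mul_mem _ (apSet b (k * l) (k * l - b * ⌈T⌉₊) ⌈T⌉₊)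
        (zero_notMem_apSet _ _ _ _) ?_).trans (hsum _ (Nat.sub_le _ _))
      intro r hr
      obtain ⟨p, hp, rfl⟩ := mem_image.1 hr
      obtain ⟨hp, hpe⟩ := mem_filter.1 hp
      obtain ⟨-, ⟨⟨ha, -, hc, -⟩, -⟩, -⟩ := hFS p hp
      have h1 := hdJ p hp
      have h2 := Nat.mul_pos ha hc
      simp only [apSet, mem_filter, mem_Ioc]
      refine ⟨⟨by omega, by omega⟩, ?_⟩
      rw [← hpe]
      simp [Nat.ModEq]
    have hsplit : ((F (l, b)).card : ℝ) ≤
        ((F (l, b)).filter fun p => p.1 * p.2.2.1 = b * p.2.2.2 + k * l).card +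
        ((F (l, b)).filter fun p => p.1 * p.2.2.1 + b * p.2.2.2 = k * l).card := by
      have h1 : F (l, b) ⊆ ((F (l, b)).filter fun p => p.1 * p.2.2.1 = b * p.2.2.2 + k * l) ∪
          ((F (l, b)).filter fun p => p.1 * p.2.2.1 + b * p.2.2.2 = k * l) := by
        intro p hp
        rw [← filter_or]
        exact mem_filter.2 ⟨hp, (hFS p hp).2.2.2.2⟩
      exact_mod_cast (card_le_card h1).trans (card_union_le _ _)
    refine (hsplit.trans (add_le_add hplus hminus)).trans (le_of_eq ?_)
    dsimp only
    rw [hT]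
    field_simp
    ring
  have hH : ∑ l ∈ Icc 1 N, 1 / (l : ℝ) ≤ 4 * Real.log X := by
    apply sum_inv_Icc_le
    have h1 : Real.log N ≤ Real.log (X ^ 3) := by
      apply Real.log_le_log (by exact_mod_cast Nat.floor_pos.2 (by linarith))
      refine (Nat.floor_le (by linarith)).trans ?_
      nlinarith [mul_le_mul hX hX (by norm_num) hX0.le]
    rw [Real.log_pow] at h1
    norm_num at h1
    linarith
  have hcard : (S.card : ℝ) ≤ ∑ i ∈ Icc 1 N ×ˢ Icc 1 N, ((F i).card : ℝ) := by
    exact_mod_cast (card_le_card hcover).trans card_biUnion_le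
  calc (S.card : ℝ) ≤ ∑ i ∈ Icc 1 N ×ˢ Icc 1 N, ((F i).card : ℝ) := hcard
    _ ≤ ∑ i ∈ Icc 1 N ×ˢ Icc 1 N, 16 * C * (X / k) * Real.log X *
        (((i.1.gcd i.2).divisors.card : ℝ) * (1 / i.1 * (1 / i.2))) := sum_le_sum hfiber
    _ = 16 * C * (X / k) * Real.log X * ∑ i ∈ Icc 1 N ×ˢ Icc 1 N,
        (((i.1.gcd i.2).divisors.card : ℝ) * (1 / i.1 * (1 / i.2))) := by rw [mul_sum]
    _ ≤ 16 * C * (X / k) * Real.log X * (2 * (∑ l ∈ Icc 1 N, 1 / (l : ℝ)) ^ 2) := by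
        gcongr
        exact sum_card_divisors_gcd_div_le N
    _ ≤ 16 * C * (X / k) * Real.log X * (2 * (4 * Real.log X) ^ 2) := by gcongr
    _ = _ := by ring

theorem IsCongruentQuad.swap {k : ℕ} {X : ℝ} {a b c d : ℕ}
    (h : IsCongruentQuad k X (a, b, c, d)) : IsCongruentQuad k X (c, d, a, b) := by
  simp only [IsCongruentQuad] at h ⊢
  rw [mul_comm c a, mul_comm d b]
  exact ⟨⟨h.1.2.2.1, h.1.2.2.2, h.1.1, h.1.2.1⟩, h.2⟩

theorem card_congruentQuad_le : ∃ C : ℝ, 0 < C ∧ ∀ (k : ℕ) (X : ℝ), 0 < k → 4 ≤ X →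
    (k : ℝ) ≤ X ^ (10 / 19 : ℝ) → ∀ S : Finset (ℕ × ℕ × ℕ × ℕ),
    (∀ p ∈ S, IsCongruentQuad k X p) → (S.card : ℝ) ≤ C * (X / k) * Real.log X ^ 3 := by
  classical
  obtain ⟨C₁, hC₁, h₁⟩ := card_congruentQuad_small_le
  obtain ⟨C₂, hC₂, h₂⟩ := card_congruentQuad_large_le
  refine ⟨C₁ + 2 * C₂, by positivity, ?_⟩
  intro k X hk hX hkX S hS
  set S₁ := S.filter fun p => ((p.2.1 * p.2.2.2 : ℕ) : ℝ) ≤ X ^ (1 / 4 : ℝ)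
  set S₂ := S.filter fun p => p.2.1 ≤ p.2.2.2 ∧ X ^ (1 / 4 : ℝ) < ((p.2.1 * p.2.2.2 : ℕ) : ℝ)
  set S₃ := S.filter fun p => p.2.2.2 ≤ p.2.1 ∧ X ^ (1 / 4 : ℝ) < ((p.2.1 * p.2.2.2 : ℕ) : ℝ)
  have hcover : S ⊆ S₁ ∪ (S₂ ∪ S₃) := by
    intro p hp
    simp only [mem_union, S₁, S₂, S₃, mem_filter, hp, true_and]
    rcases le_or_gt ((p.2.1 * p.2.2.2 : ℕ) : ℝ) (X ^ (1 / 4 : ℝ)) with h | h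
    · exact Or.inl h
    · rcases le_total p.2.1 p.2.2.2 with h' | h'
      · exact Or.inr (Or.inl ⟨h', h⟩)
      · exact Or.inr (Or.inr ⟨h', h⟩)
  have hc : (S.card : ℝ) ≤ S₁.card + (S₂.card + S₃.card) := by
    have h : S.card ≤ S₁.card + (S₂.card + S₃.card) :=
      (card_le_card hcover).trans ((card_union_le _ _).trans
        (Nat.add_le_add_left (card_union_le _ _) _))
    exact_mod_cast h
  have hb1 := h₁ k X hk hX hkX S₁ fun p hp =>
    ⟨hS p (mem_filter.1 hp).1, (mem_filter.1 hp).2⟩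
  have hb2 := h₂ k X hk hX S₂ fun p hp => ⟨hS p (mem_filter.1 hp).1, (mem_filter.1 hp).2⟩
  have hb3 := h₂ k X hk hX (S₃.image fun p => (p.2.2.1, p.2.2.2, p.1, p.2.1)) (by
    intro r hr
    obtain ⟨⟨a, b, c, d⟩, hp, rfl⟩ := mem_image.1 hr
    obtain ⟨hp1, hp2, hp3⟩ := mem_filter.1 hp
    refine ⟨(hS _ hp1).swap, hp2, ?_⟩
    rw [mul_comm]
    exact hp3)
  rw [card_image_of_injective _ (by
    rintro ⟨a, b, c, d⟩ ⟨a', b', c', d'⟩ h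
    simp only [Prod.mk.injEq] at h ⊢
    tauto)] at hb3
  linarith

theorem exists_quotient_of_modEq {k m n : ℕ} (h : n ≤ m)
    (hmod : (m : ℤ) ≡ n [ZMOD k] ∨ (m : ℤ) ≡ -n [ZMOD k]) :
    ∃ l, m = n + k * l ∨ m + n = k * l := by
  rcases hmod with hmod | hmod
  · obtain ⟨l, hl⟩ := (Nat.modEq_iff_dvd' h).1 ((Int.natCast_modEq_iff.1 hmod).symm)
    exact ⟨l, Or.inl (by omega)⟩
  · have h1 : (k : ℤ) ∣ ((m + n : ℕ) : ℤ) := by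
      have := hmod.symm.dvd
      rwa [sub_neg_eq_add, ← Nat.cast_add] at this
    obtain ⟨l, hl⟩ := Int.natCast_dvd_natCast.1 h1
    exact ⟨l, Or.inr hl⟩

end

/-- Lemma 3 (first part): if `Z₁ Z₂ > k^{19/10}` then the number of quadruples
`(a,b,c,d)` with `Z₁ ≤ ab < 2Z₁`, `Z₂ ≤ cd < 2Z₂`, `(abcd,k)=1`, `ac ≡ ±bd (mod k)`,
`ac ≠ bd` is `≪ (Z₁Z₂/k)(log Z₁Z₂)³`. -/
theorem count_quadruples_large :
    ∃ C : ℝ, ∀ k : ℕ, 0 < k → ∀ Z₁ Z₂ : ℝ, 2 ≤ Z₁ → 2 ≤ Z₂ →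
      (k : ℝ) ^ ((19 : ℝ) / 10) < Z₁ * Z₂ →
      ({p : ℕ × ℕ × ℕ × ℕ |
          0 < p.1 ∧ 0 < p.2.1 ∧ 0 < p.2.2.1 ∧ 0 < p.2.2.2 ∧
          Z₁ ≤ (p.1 * p.2.1 : ℝ) ∧ (p.1 * p.2.1 : ℝ) < 2 * Z₁ ∧
          Z₂ ≤ (p.2.2.1 * p.2.2.2 : ℝ) ∧ (p.2.2.1 * p.2.2.2 : ℝ) < 2 * Z₂ ∧
          Nat.gcd (p.1 * p.2.1 * p.2.2.1 * p.2.2.2) k = 1 ∧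
          ((p.1 * p.2.2.1 : ℤ) ≡ (p.2.1 * p.2.2.2 : ℤ) [ZMOD k] ∨
            (p.1 * p.2.2.1 : ℤ) ≡ -(p.2.1 * p.2.2.2 : ℤ) [ZMOD k]) ∧
          p.1 * p.2.2.1 ≠ p.2.1 * p.2.2.2}.ncard : ℝ) ≤
        C * (Z₁ * Z₂ / k) * (Real.log (Z₁ * Z₂)) ^ 3 := by
  classical
  obtain ⟨C, hC, hquad⟩ := card_congruentQuad_le
  refine ⟨2 * C, ?_⟩
  intro k hk Z₁ Z₂ hZ₁ hZ₂ hkZ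
  set X := Z₁ * Z₂ with hXdef
  have hX : 4 ≤ X := by nlinarith
  have hX0 : 0 < X := by linarith
  have hkX : (k : ℝ) ≤ X ^ (10 / 19 : ℝ) := by
    have h1 : ((k : ℝ) ^ (19 / 10 : ℝ)) ^ (10 / 19 : ℝ) = k := by
      rw [← Real.rpow_mul (by positivity)]
      norm_num
    rw [← h1]
    exact Real.rpow_le_rpow (by positivity) hkZ.le (by norm_num)
  set A := Finset.Icc 1 ⌊4 * X⌋₊ with hA
  set E := (A ×ˢ A ×ˢ A ×ˢ A).filter fun p => IsCongruentQuad k X p with hE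
  have hEcard := hquad k X hk hX hkX E fun p hp => (Finset.mem_filter.1 hp).2
  have hmem : ∀ p, IsCongruentQuad k X p → p ∈ E := by
    rintro ⟨a, b, c, d⟩ hp
    obtain ⟨⟨ha, hb, hc, hd⟩, -, hlt, -⟩ := id hp
    dsimp only at ha hb hc hd hlt
    have h1 : a * c * (b * d) ≤ ⌊4 * X⌋₊ := Nat.le_floor hlt.le
    have h2 : a * c ≤ a * c * (b * d) := Nat.le_mul_of_pos_right _ (Nat.mul_pos hb hd)
    have h3 : b * d ≤ a * c * (b * d) := Nat.le_mul_of_pos_left _ (Nat.mul_pos ha hc)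
    have h4 : a ≤ a * c := Nat.le_mul_of_pos_right _ hc
    have h5 : c ≤ a * c := Nat.le_mul_of_pos_left _ ha
    have h6 : b ≤ b * d := Nat.le_mul_of_pos_right _ hd
    have h7 : d ≤ b * d := Nat.le_mul_of_pos_left _ hb
    simp only [hE, hA, Finset.mem_filter, Finset.mem_product, Finset.mem_Icc]
    exact ⟨⟨⟨ha, by omega⟩, ⟨hb, by omega⟩, ⟨hc, by omega⟩, hd, by omega⟩, hp⟩
  set swap : ℕ × ℕ × ℕ × ℕ → ℕ × ℕ × ℕ × ℕ := fun p => (p.2.1, p.1, p.2.2.2, p.2.2.1) with hswap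
  have hcount : ∀ s : Set (ℕ × ℕ × ℕ × ℕ), s ⊆ ↑(E ∪ E.image swap) →
      (s.ncard : ℝ) ≤ 2 * C * (X / k) * Real.log X ^ 3 := by
    intro s hs
    have h1 := Set.ncard_le_ncard hs (Finset.finite_toSet _)
    rw [Set.ncard_coe_finset] at h1
    have h2 : s.ncard ≤ 2 * E.card := by
      refine h1.trans ((Finset.card_union_le _ _).trans ?_)
      have := Finset.card_image_le (s := E) (f := swap)
      omega
    have h3 : (s.ncard : ℝ) ≤ 2 * E.card := by exact_mod_cast h2
    linarith
  apply hcount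
  rintro ⟨a, b, c, d⟩ ⟨ha, hb, hc, hd, -, h1, -, h2, hgcd, hmod, hne⟩
  dsimp only at ha hb hc hd h1 h2 hgcd hmod hne
  have hlt : (a * b : ℝ) * (c * d) < 4 * X := by
    have : (a * b : ℝ) * (c * d) < (2 * Z₁) * (2 * Z₂) := by gcongr
    rw [hXdef]
    linarith
  have hcop : (a * c * (b * d)).Coprime k := by
    rw [show a * c * (b * d) = a * b * c * d by ring]
    exact hgcd
  rw [Finset.mem_coe, Finset.mem_union, Finset.mem_image]
  rcases lt_or_gt_of_ne hne with h | h
  · refine Or.inr ⟨(b, a, d, c), hmem _ ⟨⟨hb, ha, hd, hc⟩, h, ?_, ?_, ?_⟩, rfl⟩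
    · push_cast
      linarith
    · rw [mul_comm]
      exact hcop
    · apply exists_quotient_of_modEq h.le
      push_cast
      refine hmod.imp (fun h => h.symm) fun h => ?_
      simpa using h.symm.neg
  · refine Or.inl (hmem _ ⟨⟨ha, hb, hc, hd⟩, h, ?_, hcop, ?_⟩)
    · push_cast
      linarith
    · apply exists_quotient_of_modEq h.le
      push_cast
      exact hmod
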